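/- arXiv:2209.04236 — 6 statements merged into one kernel-verified Lean document; each statement's English description precedes it below -/
import Mathlib

section
/- Let d ≥ 2. The non-centered Hardy–Littlewood maximal operator M_μ^B associated with the measure μ and the family of open Euclidean (ℓ²) balls in ℝ^d is not of weak type (1,1) with respect to μ: there is no constant C > 0 such that μ({x ∈ ℝ^d : M_μ^B f(x) > λ}) ≤ C λ⁻¹ ‖f‖_{L¹(dμ)} for all f ∈ L¹(dμ) and all λ > 0. -/
open MeasureTheory ENNReal

/-- The exponential measure `dμ(x) = exp(-|x₁|-⋯-|x_d|) dx` on `ℝ^d`. -/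
noncomputable def expMeasure (d : ℕ) : Measure (Fin d → ℝ) :=
  volume.withDensity (fun x => ENNReal.ofReal (Real.exp (-∑ i, |x i|)))

/-- The family of open Euclidean (ℓ²) balls in `ℝ^d`. -/
def euclideanBalls (d : ℕ) : Set (Set (Fin d → ℝ)) :=
  {B | ∃ (z : Fin d → ℝ) (r : ℝ), 0 < r ∧
    B = {y | Real.sqrt (∑ i, (z i - y i) ^ 2) < r}}

/-- The non-centered Hardy–Littlewood maximal operator associated with a measure `μ` and a
family `F` of balls: `M f (x) = sup { (1/μ B) ∫_B |f| dμ : x ∈ B ∈ F, μ B > 0 }`. -/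
noncomputable def maximalOp (d : ℕ) (μ : Measure (Fin d → ℝ))
    (F : Set (Set (Fin d → ℝ))) (f : (Fin d → ℝ) → ℝ) (x : Fin d → ℝ) : ℝ≥0∞ :=
  ⨆ (B : Set (Fin d → ℝ)) (_ : B ∈ F) (_ : x ∈ B) (_ : 0 < μ B),
    (∫⁻ y in B, ENNReal.ofReal |f y| ∂μ) / μ B

/-!
In the positive orthant `μ` has density `exp (-∑ xₖ)`, so a ball there carries most of its mass near
its lowest point, where it looks like a paraboloid. Hence, if `v ⟂ (1, …, 1)` and the radius `m ^ 2`
is large, half of the mass of the ball lies within distance `O(m)`, the square root of the radius,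
of the hyperplane through the center orthogonal to `v`: the translation by `-(m • v + 1)` maps the
rest of the half ball in the direction of `v` back into the ball, while it multiplies measures by
`exp d`, and likewise for `-v`.

Sliding the ball along `v` in steps of order `m` does not change its measure. The corresponding
slabs, each of at least half the mass, are disjoint, while for large `m` any prescribed number `N`
of the translated balls have a common interior point. With `f` the indicator of the intersection of
these balls, a weak type (1,1) bound with constant `C` would force `N ≤ 2 * C`.
-/

open Function Set
open scoped Pointwise

section WeakType

variable {d : ℕ} {μ : Measure (Fin d → ℝ)} {F : Set (Set (Fin d → ℝ))} {C : ℝ}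

/-- The weak type (1,1) inequality with constant `C` for the maximal operator of the measure `μ`
and the family `F`. -/
def HasWeakTypeOneOne (μ : Measure (Fin d → ℝ)) (F : Set (Set (Fin d → ℝ))) (C : ℝ) : Prop :=
  ∀ f : (Fin d → ℝ) → ℝ, Integrable f μ → ∀ lam : ℝ, 0 < lam →
    μ {x | ENNReal.ofReal lam < maximalOp d μ F f x}
      ≤ ENNReal.ofReal (C / lam) * ∫⁻ x, ENNReal.ofReal |f x| ∂μ

lemma ofReal_abs_indicator_one {α : Type*} (G : Set α) (x : α) :
    ENNReal.ofReal |G.indicator (1 : α → ℝ) x| = G.indicator (1 : α → ℝ≥0∞) x := by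
  by_cases hx : x ∈ G <;> simp [hx]

lemma div_le_maximalOp_indicator_one {G B : Set (Fin d → ℝ)} {x : Fin d → ℝ}
    (hG : MeasurableSet G) (hBF : B ∈ F) (hGB : G ⊆ B) (hB : 0 < μ B) (hx : x ∈ B) :
    μ G / μ B ≤ maximalOp d μ F (G.indicator 1) x := by
  have hint : ∫⁻ y in B, ENNReal.ofReal |G.indicator (1 : (Fin d → ℝ) → ℝ) y| ∂μ = μ G := by
    simp only [ofReal_abs_indicator_one]
    rw [lintegral_indicator_one hG, Measure.restrict_apply hG, inter_eq_left.2 hGB]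
  rw [← hint]
  exact le_iSup₂_of_le B hBF <| le_iSup₂_of_le hx hB le_rfl

lemma HasWeakTypeOneOne.measure_sUnion_le (h : HasWeakTypeOneOne μ F C)
    {G : Set (Fin d → ℝ)} (hG : MeasurableSet G) (hG₀ : μ G ≠ 0)
    {𝓑 : Set (Set (Fin d → ℝ))} (h𝓑 : 𝓑 ⊆ F) (hG𝓑 : ∀ B ∈ 𝓑, G ⊆ B)
    {b : ℝ≥0∞} (hb : b ≠ ⊤) (h𝓑b : ∀ B ∈ 𝓑, μ B ≤ b) :
    μ (⋃₀ 𝓑) ≤ ENNReal.ofReal C * b := by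
  rcases 𝓑.eq_empty_or_nonempty with rfl | ⟨B₀, hB₀⟩
  · simp
  have hGtop : μ G ≠ ⊤ := ne_top_of_le_ne_top hb <|
    (measure_mono (hG𝓑 B₀ hB₀)).trans (h𝓑b B₀ hB₀)
  refine ENNReal.le_mul_of_forall_lt (.inr hb) (.inl ofReal_ne_top) fun C' hC' b' hb' ↦ ?_
  -- The strict inequality defining the level set forces a level slightly below `μ G / b`.
  obtain ⟨c, hbc, hcb'⟩ := ENNReal.lt_iff_exists_nnreal_btwn.1 hb'
  have hc : 0 < (c : ℝ≥0∞) := bot_le.trans_lt hbc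
  have hlevel : 0 < (μ G / c).toReal :=
    ENNReal.toReal_pos (ENNReal.div_pos hG₀ coe_ne_top).ne' (ENNReal.div_ne_top hGtop hc.ne')
  have hlevel_eq : ENNReal.ofReal (μ G / c).toReal = μ G / c :=
    ENNReal.ofReal_toReal (ENNReal.div_ne_top hGtop hc.ne')
  have hsub : ⋃₀ 𝓑 ⊆ {x | ENNReal.ofReal (μ G / c).toReal
      < maximalOp d μ F (G.indicator 1) x} := by
    rintro x ⟨B, hB, hx⟩
    have hB₀ : 0 < μ B := (pos_iff_ne_zero.2 hG₀).trans_le (measure_mono (hG𝓑 B hB))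
    calc ENNReal.ofReal (μ G / c).toReal = μ G / c := hlevel_eq
      _ < μ G / μ B := ENNReal.div_lt_div_left hG₀ hGtop ((h𝓑b B hB).trans_lt hbc)
      _ ≤ _ := div_le_maximalOp_indicator_one hG (h𝓑 hB) (hG𝓑 B hB) hB₀ hx
  have hf : Integrable (G.indicator (1 : (Fin d → ℝ) → ℝ)) μ :=
    (integrable_indicator_iff hG).2 (integrableOn_const hGtop)
  calc μ (⋃₀ 𝓑)
      ≤ ENNReal.ofReal (C / (μ G / c).toReal)
          * ∫⁻ x, ENNReal.ofReal |G.indicator (1 : (Fin d → ℝ) → ℝ) x| ∂μ :=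
        (measure_mono hsub).trans (h _ hf _ hlevel)
    _ = ENNReal.ofReal C / (μ G / c) * μ G := by
        simp only [ofReal_abs_indicator_one]
        rw [lintegral_indicator_one hG, ENNReal.ofReal_div_of_pos hlevel, hlevel_eq]
    _ = ENNReal.ofReal C * c := by
        rw [div_eq_mul_inv, ENNReal.inv_div (.inl coe_ne_top) (.inl hc.ne'), mul_assoc,
          ENNReal.div_mul_cancel hG₀ hGtop]
    _ ≤ C' * b' := by gcongr

lemma HasWeakTypeOneOne.card_le (h : HasWeakTypeOneOne μ F C) {ι : Type*} [Fintype ι]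
    {G : Set (Fin d → ℝ)} (hG : MeasurableSet G) (hG₀ : μ G ≠ 0)
    {B E : ι → Set (Fin d → ℝ)} (hBF : ∀ i, B i ∈ F) (hGB : ∀ i, G ⊆ B i)
    (hE : ∀ i, MeasurableSet (E i)) (hEB : ∀ i, E i ⊆ B i) (hdisj : Pairwise (Disjoint on E))
    {K b : ℝ≥0∞} (hb₀ : b ≠ 0) (hb : b ≠ ⊤) (hBb : ∀ i, μ (B i) ≤ b)
    (hbE : ∀ i, b ≤ K * μ (E i)) :
    (Fintype.card ι : ℝ≥0∞) ≤ K * ENNReal.ofReal C := by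
  refine (ENNReal.mul_le_mul_iff_left hb₀ hb).1 ?_
  calc (Fintype.card ι : ℝ≥0∞) * b = ∑ _i : ι, b := by simp
    _ ≤ ∑ i, K * μ (E i) := Finset.sum_le_sum fun i _ ↦ hbE i
    _ = K * μ (⋃ i, E i) := by rw [measure_iUnion hdisj hE, tsum_fintype, Finset.mul_sum]
    _ ≤ K * μ (⋃₀ range B) := by
        rw [sUnion_range]
        gcongr with i
        exact hEB i
    _ ≤ K * (ENNReal.ofReal C * b) := by
        gcongr
        exact h.measure_sUnion_le hG hG₀ (range_subset_iff.2 hBF) (forall_mem_range.2 hGB) hb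
          (forall_mem_range.2 hBb)
    _ = K * ENNReal.ofReal C * b := (mul_assoc ..).symm

end WeakType

section ExpMeasure

variable {d : ℕ}

lemma continuous_exp_neg_sum_abs :
    Continuous fun x : Fin d → ℝ ↦ Real.exp (-∑ i, |x i|) := by
  fun_prop

instance : IsLocallyFiniteMeasure (expMeasure d) :=
  IsLocallyFiniteMeasure.withDensity_ofReal continuous_exp_neg_sum_abs

instance : (expMeasure d).IsOpenPosMeasure :=
  (withDensity_absolutelyContinuous'
    continuous_exp_neg_sum_abs.measurable.ennreal_ofReal.aemeasurable
    (.of_forall fun _ ↦ (ENNReal.ofReal_pos.2 (Real.exp_pos _)).ne')).isOpenPosMeasure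

lemma expMeasure_vadd {S : Set (Fin d → ℝ)} (hS : MeasurableSet S) {w : Fin d → ℝ}
    (hS₀ : ∀ x ∈ S, 0 ≤ x) (hwS₀ : ∀ x ∈ S, 0 ≤ w + x) :
    expMeasure d (w +ᵥ S) = ENNReal.ofReal (Real.exp (-∑ k, w k)) * expMeasure d S := by
  have hsum : ∀ x : Fin d → ℝ, 0 ≤ x → ∑ k, |x k| = ∑ k, x k := fun x hx ↦
    Finset.sum_congr rfl fun k _ ↦ abs_of_nonneg (hx k)
  have hdensity : ∀ x ∈ S, ENNReal.ofReal (Real.exp (-∑ k, |(w + x) k|)) =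
      ENNReal.ofReal (Real.exp (-∑ k, w k)) * ENNReal.ofReal (Real.exp (-∑ k, |x k|)) := by
    intro x hx
    rw [hsum _ (hS₀ x hx), hsum _ (hwS₀ x hx), ← ENNReal.ofReal_mul (Real.exp_pos _).le,
      ← Real.exp_add, ← neg_add, ← Finset.sum_add_distrib]
    rfl
  unfold expMeasure
  rw [withDensity_apply', withDensity_apply', ← lintegral_const_mul' _ _ ofReal_ne_top,
    ← setLIntegral_congr_fun hS hdensity]
  exact ((measurePreserving_add_left volume w).setLIntegral_comp_emb
    (measurableEmbedding_addLeft w) _ S).symm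

end ExpMeasure

section EuclideanBall

variable {d : ℕ} {z z' y v w : Fin d → ℝ} {r a : ℝ}

/-- The open Euclidean ball with center `z` and radius `r`, as a subset of `Fin d → ℝ`, whose
metric balls are cubes. -/
def euclideanBall (z : Fin d → ℝ) (r : ℝ) : Set (Fin d → ℝ) :=
  {y | √(∑ i, (z i - y i) ^ 2) < r}

lemma euclideanBall_mem_euclideanBalls (hr : 0 < r) : euclideanBall z r ∈ euclideanBalls d :=
  ⟨z, r, hr, rfl⟩

lemma mem_euclideanBall_iff_dotProduct (hr : 0 < r) :
    y ∈ euclideanBall z r ↔ (y - z) ⬝ᵥ (y - z) < r ^ 2 := by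
  rw [euclideanBall, mem_ofPred_eq, Real.sqrt_lt' hr]
  simp only [dotProduct, Pi.sub_apply, ← pow_two, sub_sq_comm]

lemma isOpen_euclideanBall : IsOpen (euclideanBall z r) :=
  isOpen_lt (by fun_prop) continuous_const

lemma vadd_euclideanBall : w +ᵥ euclideanBall z r = euclideanBall (w + z) r := by
  ext y
  have hsub : ∀ k, z k - (-w + y) k = (w + z) k - y k := fun k ↦ by
    simp only [Pi.add_apply, Pi.neg_apply]
    ring
  simp only [mem_vadd_set_iff_neg_vadd_mem, euclideanBall, mem_ofPred_eq, vadd_eq_add, hsub]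

lemma abs_sub_lt_of_mem_euclideanBall (hy : y ∈ euclideanBall z r) (k : Fin d) :
    |z k - y k| < r :=
  (Real.abs_le_sqrt (Finset.single_le_sum (f := fun i ↦ (z i - y i) ^ 2)
    (fun _ _ ↦ sq_nonneg _) (Finset.mem_univ k))).trans_lt hy

lemma nonneg_of_mem_euclideanBall (hz : ∀ k, r ≤ z k) (hy : y ∈ euclideanBall z r) : 0 ≤ y :=
  fun k ↦ by
    have := (abs_lt.1 (abs_sub_lt_of_mem_euclideanBall hy k)).2
    simp only [Pi.zero_apply]
    linarith [hz k]

lemma le_apply_of_const_mem_euclideanBall (h : (fun _ ↦ 2 * r) ∈ euclideanBall z r) (k : Fin d) :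
    r ≤ z k := by
  linarith [(abs_lt.1 (abs_sub_lt_of_mem_euclideanBall h k)).1]

lemma expMeasure_euclideanBall_ne_zero (hr : 0 < r) : expMeasure d (euclideanBall z r) ≠ 0 :=
  isOpen_euclideanBall.measure_ne_zero _
    ⟨z, (mem_euclideanBall_iff_dotProduct hr).2 (by simpa using pow_pos hr 2)⟩

lemma expMeasure_euclideanBall_ne_top : expMeasure d (euclideanBall z r) ≠ ⊤ := by
  have hsub : euclideanBall z r ⊆ Metric.closedBall z r := fun y hy ↦
    (dist_pi_le_iff ((Real.sqrt_nonneg _).trans hy.le)).2 fun k ↦ by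
      rw [dist_comm]
      exact (abs_sub_lt_of_mem_euclideanBall hy k).le
  exact ne_top_of_le_ne_top measure_closedBall_lt_top.ne (measure_mono hsub)

lemma expMeasure_euclideanBall_add (hz : ∀ k, r ≤ z k) (hwz : ∀ k, r ≤ (w + z) k) :
    expMeasure d (euclideanBall (w + z) r)
      = ENNReal.ofReal (Real.exp (-∑ k, w k)) * expMeasure d (euclideanBall z r) := by
  rw [← vadd_euclideanBall]
  exact expMeasure_vadd isOpen_euclideanBall.measurableSet
    (fun _ ↦ nonneg_of_mem_euclideanBall hz) fun x hx ↦ nonneg_of_mem_euclideanBall hwz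
      (vadd_euclideanBall (w := w) ▸ vadd_mem_vadd_set hx)

lemma mem_euclideanBall_smul_add {t : ℝ} (hr : 0 < r) (ht : t ^ 2 * (v ⬝ᵥ v) < r ^ 2) :
    y ∈ euclideanBall (t • v + y) r := by
  rw [mem_euclideanBall_iff_dotProduct hr, sub_add_cancel_right, neg_dotProduct_neg,
    smul_dotProduct, dotProduct_smul, smul_eq_mul, smul_eq_mul, ← mul_assoc, ← pow_two]
  exact ht

/-- The cap of the ball `euclideanBall z r` cut off by a hyperplane orthogonal to `v`; the height
`a` of the hyperplane over the center is measured by `v ⬝ᵥ ·`, without normalizing `v`. -/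
def euclideanCap (v z : Fin d → ℝ) (r a : ℝ) : Set (Fin d → ℝ) :=
  euclideanBall z r ∩ {y | a ≤ v ⬝ᵥ (y - z)}

/-- The part of the ball `euclideanBall z r` between the two hyperplanes orthogonal to `v` at
heights `±a` over the center, complementary to the caps of `v` and `-v`. -/
def euclideanSlab (v z : Fin d → ℝ) (r a : ℝ) : Set (Fin d → ℝ) :=
  euclideanBall z r ∩ {y | |v ⬝ᵥ (y - z)| < a}

lemma measurableSet_euclideanCap : MeasurableSet (euclideanCap v z r a) :=
  isOpen_euclideanBall.measurableSet.inter <|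
    measurableSet_le measurable_const (by unfold dotProduct; fun_prop)

lemma measurableSet_euclideanSlab : MeasurableSet (euclideanSlab v z r a) :=
  isOpen_euclideanBall.measurableSet.inter <|
    measurableSet_lt (by unfold dotProduct; fun_prop) measurable_const

lemma euclideanBall_subset_slab_union_caps :
    euclideanBall z r ⊆
      euclideanSlab v z r a ∪ (euclideanCap v z r a ∪ euclideanCap (-v) z r a) := by
  intro y hy
  rcases lt_or_ge |v ⬝ᵥ (y - z)| a with h | h
  · exact .inl ⟨hy, h⟩
  · refine .inr <| (le_abs.1 h).imp (fun h ↦ ⟨hy, h⟩) fun h ↦ ⟨hy, ?_⟩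
    rwa [mem_ofPred_eq, neg_dotProduct]

lemma disjoint_euclideanSlab (h : 2 * a ≤ |v ⬝ᵥ (z - z')|) :
    Disjoint (euclideanSlab v z r a) (euclideanSlab v z' r a) := by
  refine disjoint_left.2 fun y hy hy' ↦ h.not_gt ?_
  calc |v ⬝ᵥ (z - z')| = |v ⬝ᵥ (y - z') - v ⬝ᵥ (y - z)| := by
        rw [← dotProduct_sub, _root_.sub_sub_sub_cancel_left]
    _ ≤ |v ⬝ᵥ (y - z')| + |v ⬝ᵥ (y - z)| := abs_sub _ _
    _ < 2 * a := by linarith [hy.2.out, hy'.2.out]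

lemma pairwise_disjoint_euclideanSlab {s : ℝ} (h : 2 * a ≤ s * (v ⬝ᵥ v)) :
    Pairwise (Disjoint on fun n : ℕ ↦ euclideanSlab v ((n * s) • v + z) r a) := by
  intro n n' hne
  have hvv : 0 ≤ v ⬝ᵥ v := by simpa using dotProduct_self_star_nonneg v
  have hgap : (1 : ℝ) ≤ |(n : ℝ) - n'| := by
    exact_mod_cast Int.one_le_abs (sub_ne_zero.2 (Nat.cast_injective.ne hne))
  refine disjoint_euclideanSlab ?_
  calc 2 * a ≤ |s| * (v ⬝ᵥ v) := h.trans (mul_le_mul_of_nonneg_right (le_abs_self s) hvv)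
    _ ≤ |(n : ℝ) - n'| * (|s| * (v ⬝ᵥ v)) := le_mul_of_one_le_left (by positivity) hgap
    _ = |v ⬝ᵥ ((n * s) • v + z - ((n' * s) • v + z))| := by
      rw [add_sub_add_right_eq_sub, ← sub_smul, ← sub_mul, dotProduct_smul, smul_eq_mul, abs_mul,
        abs_mul, abs_of_nonneg hvv, mul_assoc]

end EuclideanBall

section Concentration

variable {d : ℕ} {v z y : Fin d → ℝ} {m : ℝ}

lemma dotProduct_sub_smul_add_one (hv : ∑ k, v k = 0) (u : Fin d → ℝ) (m : ℝ) :
    (u - (m • v + 1)) ⬝ᵥ (u - (m • v + 1)) =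
      u ⬝ᵥ u - 2 * m * (v ⬝ᵥ u) - 2 * ∑ k, u k + m ^ 2 * (v ⬝ᵥ v) + d := by
  simp only [sub_dotProduct, dotProduct_sub, add_dotProduct, dotProduct_add, smul_dotProduct,
    dotProduct_smul, dotProduct_one, one_dotProduct, dotProduct_comm u v, hv, smul_eq_mul,
    Pi.sub_apply, Pi.add_apply, Pi.smul_apply, Pi.one_apply, Finset.sum_sub_distrib,
    Finset.sum_add_distrib, ← Finset.mul_sum, Finset.sum_const, Finset.card_univ,
    Fintype.card_fin, nsmul_eq_mul]
  ring

lemma sub_smul_add_one_mem_euclideanBall (hv : ∑ k, v k = 0) (hm : 1 ≤ m)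
    (hy : y ∈ euclideanCap v z (m ^ 2) ((v ⬝ᵥ v + 2 * d) * m)) :
    y - (m • v + 1) ∈ euclideanBall z (m ^ 2) := by
  have hr : 0 < m ^ 2 := by positivity
  have hnorm := (mem_euclideanBall_iff_dotProduct hr).1 hy.1
  have hheight : (v ⬝ᵥ v + 2 * d) * m ≤ v ⬝ᵥ (y - z) := hy.2
  have hsum : -(d * m ^ 2) ≤ ∑ k, (y - z) k := by
    calc -(d * m ^ 2) = ∑ _k : Fin d, -m ^ 2 := by simp
      _ ≤ ∑ k, (y - z) k := Finset.sum_le_sum fun k _ ↦ by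
          have := (abs_lt.1 (abs_sub_lt_of_mem_euclideanBall hy.1 k)).2
          simp only [Pi.sub_apply]
          linarith
  have hd : (d : ℝ) ≤ d * m ^ 2 := le_mul_of_one_le_right (by positivity) (one_le_pow₀ hm)
  have hvv : 0 ≤ v ⬝ᵥ v * m ^ 2 :=
    mul_nonneg (by simpa using dotProduct_self_star_nonneg v) hr.le
  have hheight' := mul_le_mul_of_nonneg_right hheight (zero_le_one.trans hm)
  rw [mem_euclideanBall_iff_dotProduct hr, sub_right_comm, dotProduct_sub_smul_add_one hv]
  linarith

lemma exp_mul_expMeasure_euclideanCap_le (hv : ∑ k, v k = 0) (hm : 1 ≤ m)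
    (hz : ∀ k, m ^ 2 ≤ z k) :
    ENNReal.ofReal (Real.exp d) *
        expMeasure d (euclideanCap v z (m ^ 2) ((v ⬝ᵥ v + 2 * d) * m))
      ≤ expMeasure d (euclideanBall z (m ^ 2)) := by
  set S := euclideanCap v z (m ^ 2) ((v ⬝ᵥ v + 2 * d) * m)
  set w : Fin d → ℝ := -(m • v + 1)
  have hwS : ∀ y ∈ S, w + y ∈ euclideanBall z (m ^ 2) := fun y hy ↦ by
    rw [neg_add_eq_sub]
    exact sub_smul_add_one_mem_euclideanBall hv hm hy
  have hsum : -∑ k, w k = d := by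
    simp [w, Finset.sum_add_distrib, ← Finset.mul_sum, hv]
  calc ENNReal.ofReal (Real.exp d) * expMeasure d S = expMeasure d (w +ᵥ S) := by
        rw [expMeasure_vadd measurableSet_euclideanCap
          (fun y hy ↦ nonneg_of_mem_euclideanBall hz hy.1)
          (fun y hy ↦ nonneg_of_mem_euclideanBall hz (hwS y hy)), hsum]
    _ ≤ expMeasure d (euclideanBall z (m ^ 2)) :=
        measure_mono (image_subset_iff.2 hwS)

lemma le_two_mul_of_le_add_of_four_mul_le {t s a b : ℝ≥0∞} (ht : t ≠ ⊤)
    (h : t ≤ s + (a + b)) (ha : 4 * a ≤ t) (hb : 4 * b ≤ t) : t ≤ 2 * s := by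
  have htop : 2 * t ≠ ⊤ := mul_ne_top ofNat_ne_top ht
  refine (ENNReal.mul_le_mul_iff_right two_ne_zero ofNat_ne_top).1 <|
    (ENNReal.add_le_add_iff_right htop).1 ?_
  calc 2 * t + 2 * t = 4 * t := by ring
    _ ≤ 4 * (s + (a + b)) := by gcongr
    _ = 4 * s + (4 * a + 4 * b) := by ring
    _ ≤ 4 * s + (t + t) := by gcongr
    _ = 2 * (2 * s) + 2 * t := by ring

lemma expMeasure_euclideanBall_le_two_mul_slab (hd : 2 ≤ d) (hv : ∑ k, v k = 0) (hm : 1 ≤ m)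
    (hz : ∀ k, m ^ 2 ≤ z k) :
    expMeasure d (euclideanBall z (m ^ 2))
      ≤ 2 * expMeasure d (euclideanSlab v z (m ^ 2) ((v ⬝ᵥ v + 2 * d) * m)) := by
  set a := (v ⬝ᵥ v + 2 * d) * m with ha
  set t := expMeasure d (euclideanBall z (m ^ 2))
  have hexp : 4 ≤ ENNReal.ofReal (Real.exp d) := ENNReal.ofNat_le_ofReal.2 <| by
    have hd' : (2 : ℝ) ≤ d := by exact_mod_cast hd
    nlinarith [Real.quadratic_le_exp_of_nonneg d.cast_nonneg]
  have hcap : 4 * expMeasure d (euclideanCap v z (m ^ 2) a) ≤ t :=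
    (mul_le_mul_left hexp _).trans (exp_mul_expMeasure_euclideanCap_le hv hm hz)
  have hcap' : 4 * expMeasure d (euclideanCap (-v) z (m ^ 2) a) ≤ t := by
    rw [ha, ← neg_dotProduct_neg v v]
    exact (mul_le_mul_left hexp _).trans
      (exp_mul_expMeasure_euclideanCap_le (by simpa using hv) hm hz)
  have hcover : t ≤ expMeasure d (euclideanSlab v z (m ^ 2) a)
      + (expMeasure d (euclideanCap v z (m ^ 2) a)
        + expMeasure d (euclideanCap (-v) z (m ^ 2) a)) :=
    (measure_mono euclideanBall_subset_slab_union_caps).trans <|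
      (measure_union_le _ _).trans (add_le_add_right (measure_union_le _ _) _)
  exact le_two_mul_of_le_add_of_four_mul_le expMeasure_euclideanBall_ne_top hcover hcap hcap'

end Concentration

lemma exists_sum_eq_zero_dotProduct_self_eq_two {d : ℕ} (hd : 2 ≤ d) :
    ∃ v : Fin d → ℝ, ∑ k, v k = 0 ∧ v ⬝ᵥ v = 2 := by
  have : Nontrivial (Fin d) := Fin.nontrivial_iff_two_le.2 hd
  obtain ⟨i, j, hij⟩ := exists_pair_ne (Fin d)
  exact ⟨Pi.single i 1 - Pi.single j 1, by simp, by norm_num [hij, hij.symm]⟩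

lemma exists_euclideanBalls_with_disjoint_halves {d : ℕ} (hd : 2 ≤ d) (N : ℕ) :
    ∃ r > 0, ∃ p : Fin d → ℝ, ∃ (z : Fin N → Fin d → ℝ) (E : Fin N → Set (Fin d → ℝ)),
      (∀ n, p ∈ euclideanBall (z n) r) ∧
      (∀ n, expMeasure d (euclideanBall (z n) r) = expMeasure d (euclideanBall p r)) ∧
      (∀ n, MeasurableSet (E n)) ∧ (∀ n, E n ⊆ euclideanBall (z n) r) ∧
      Pairwise (Disjoint on E) ∧
      ∀ n, expMeasure d (euclideanBall p r) ≤ 2 * expMeasure d (E n) := by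
  obtain ⟨v, hv, hvv⟩ := exists_sum_eq_zero_dotProduct_self_eq_two hd
  set A : ℝ := v ⬝ᵥ v + 2 * d
  have : 0 < A := by simp only [A, hvv]; positivity
  set m : ℝ := 2 * (N * A) + 1
  have hm : 1 ≤ m := le_add_of_nonneg_left (by positivity)
  have hr : 0 < m ^ 2 := by positivity
  set p : Fin d → ℝ := fun _ ↦ 2 * m ^ 2
  set z : Fin N → Fin d → ℝ := fun n ↦ (n * (A * m)) • v + p
  have hp : ∀ n, p ∈ euclideanBall (z n) (m ^ 2) := fun n ↦ by
    have hn : n * A ≤ N * A := by gcongr; exact n.is_lt.le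
    have hn₀ : 0 ≤ n * A := by positivity
    have hnm : (n * A) ^ 2 * 2 < m ^ 2 := by
      simp only [m]
      nlinarith
    refine mem_euclideanBall_smul_add hr ?_
    calc (n * (A * m)) ^ 2 * (v ⬝ᵥ v) = (n * A) ^ 2 * 2 * m ^ 2 := by rw [hvv]; ring
      _ < m ^ 2 * m ^ 2 := by gcongr
      _ = (m ^ 2) ^ 2 := by ring
  have hz : ∀ n k, m ^ 2 ≤ z n k := fun n ↦ le_apply_of_const_mem_euclideanBall (hp n)
  have hball : ∀ n, expMeasure d (euclideanBall (z n) (m ^ 2))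
      = expMeasure d (euclideanBall p (m ^ 2)) := fun n ↦ by
    rw [expMeasure_euclideanBall_add (fun k ↦ by simp only [p]; linarith) (hz n)]
    simp [← Finset.mul_sum, hv]
  refine ⟨m ^ 2, hr, p, z, fun n ↦ euclideanSlab v (z n) (m ^ 2) (A * m), hp, hball,
    fun _ ↦ measurableSet_euclideanSlab, fun _ ↦ inter_subset_left,
    (pairwise_disjoint_euclideanSlab ?_).comp_of_injective Fin.val_injective,
    fun n ↦ hball n ▸ expMeasure_euclideanBall_le_two_mul_slab hd hv hm (hz n)⟩
  rw [hvv, mul_comm]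

/-- For `d ≥ 2`, the non-centered maximal operator `M_μ^𝓑` associated with the exponential
measure `μ` and the family of open Euclidean balls is not of weak type (1,1) w.r.t. `μ`. -/
theorem euclidean_maximal_not_weak_type_one_one (d : ℕ) (hd : 2 ≤ d) :
    ¬ ∃ C : ℝ, 0 < C ∧
      ∀ f : (Fin d → ℝ) → ℝ, Integrable f (expMeasure d) →
        ∀ lam : ℝ, 0 < lam →
          expMeasure d {x | ENNReal.ofReal lam
              < maximalOp d (expMeasure d) (euclideanBalls d) f x}
            ≤ ENNReal.ofReal (C / lam) * ∫⁻ x, ENNReal.ofReal |f x| ∂(expMeasure d) := by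
  rintro ⟨C, hC, hweak⟩
  obtain ⟨N, hN⟩ := exists_nat_gt (2 * C)
  obtain ⟨r, hr, p, z, E, hp, hball, hE, hEB, hdisj, hhalf⟩ :=
    exists_euclideanBalls_with_disjoint_halves hd N
  have hopen : IsOpen (⋂ n, euclideanBall (z n) r) :=
    isOpen_iInter_of_finite fun _ ↦ isOpen_euclideanBall
  have hcard : (N : ℝ≥0∞) ≤ 2 * ENNReal.ofReal C := by
    simpa using HasWeakTypeOneOne.card_le hweak hopen.measurableSet
      (hopen.measure_ne_zero _ ⟨p, mem_iInter.2 hp⟩)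
      (fun n ↦ euclideanBall_mem_euclideanBalls hr) (iInter_subset _) hE hEB hdisj
      (expMeasure_euclideanBall_ne_zero hr) expMeasure_euclideanBall_ne_top
      (fun n ↦ (hball n).le) hhalf
  have hN₀ : 0 < N := Nat.cast_pos.1 ((by positivity : 0 < 2 * C).trans hN)
  rw [← ofReal_ofNat, ← ofReal_mul zero_le_two, natCast_le_ofReal hN₀.ne'] at hcard
  exact hN.not_ge hcard
end

section
/- Let d ≥ 2. The non-centered Hardy–Littlewood maximal operator M_μ^Q associated with the measure μ and the family of open ℓ^∞ balls (cubes with sides parallel to the coordinate axes) in ℝ^d is not of weak type (1,1) with respect to μ: there is no constant C > 0 such that μ({x ∈ ℝ^d : M_μ^Q f(x) > λ}) ≤ C λ⁻¹ ‖f‖_{L¹(dμ)} for all f ∈ L¹(dμ) and all λ > 0. -/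
open MeasureTheory ENNReal

/-- The family of open ℓ^∞ balls (cubes with sides parallel to the axes) in `ℝ^d`. -/
def cubeBalls (d : ℕ) : Set (Set (Fin d → ℝ)) :=
  {B | ∃ (z : Fin d → ℝ) (r : ℝ), 0 < r ∧
    B = {y | ∀ i, |z i - y i| < r}}

/-!
If `0 ≤ c`, translating a set in the positive orthant by `c` multiplies its measure by
`exp (-∑ i, c i)`. Hence all cubes `c + (0, n + 1)^d`, with `c` running over the lattice points of
the simplex `0 ≤ c`, `∑ i, c i = n`, have measure at most a constant times `exp (-n)`. Each of them
contains `c + (0, 1)^d` together with the common cube `Q = (n, n + 1)^d`. For the indicator of `Q`,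
a weak type (1,1) inequality therefore bounds the measure of the union of the disjoint cubes
`c + (0, 1)^d` by a constant times `exp (-n)`. But each of these has measure
`exp (-n) * μ ((0, 1)^d)`, so the number of lattice points in the simplex would be bounded
independently of `n`, which is false as soon as `2 ≤ d`.
-/

/-- The weak type (1,1) inequality with constant `C` for the maximal operator associated with the
measure `μ` and the family of balls `F`. -/
def HasWeakTypeOneOneWith (d : ℕ) (μ : Measure (Fin d → ℝ)) (F : Set (Set (Fin d → ℝ)))
    (C : ℝ) : Prop :=
  ∀ f : (Fin d → ℝ) → ℝ, Integrable f μ → ∀ lam : ℝ, 0 < lam →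
    μ {x | ENNReal.ofReal lam < maximalOp d μ F f x}
      ≤ ENNReal.ofReal (C / lam) * ∫⁻ x, ENNReal.ofReal |f x| ∂μ

section MaximalOperator

lemma setLIntegral_abs_indicator_one {α : Type*} [MeasurableSpace α] {μ : Measure α} {Q : Set α}
    (hQ : MeasurableSet Q) (B : Set α) :
    ∫⁻ y in B, ENNReal.ofReal |Q.indicator 1 y| ∂μ = μ (Q ∩ B) := by
  have abs_indicator : ∀ y, ENNReal.ofReal |Q.indicator 1 y| = Q.indicator 1 y := by
    intro y
    by_cases hy : y ∈ Q <;> simp [hy]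
  simp_rw [abs_indicator]
  rw [lintegral_indicator_one hQ, Measure.restrict_apply hQ]

variable {d : ℕ} {μ : Measure (Fin d → ℝ)} {F : Set (Set (Fin d → ℝ))} {Q B E : Set (Fin d → ℝ)}

lemma measure_inter_div_le_maximalOp_indicator (hQ : MeasurableSet Q) (hB : B ∈ F)
    (hμB : 0 < μ B) {x : Fin d → ℝ} (hx : x ∈ B) :
    μ (Q ∩ B) / μ B ≤ maximalOp d μ F (Q.indicator 1) x := by
  rw [← setLIntegral_abs_indicator_one hQ]
  exact le_iSup₂_of_le B hB (le_iSup₂_of_le hx hμB le_rfl)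

lemma HasWeakTypeOneOneWith.measure_le {C D : ℝ} (h : HasWeakTypeOneOneWith d μ F C)
    (hQ : MeasurableSet Q) (hQ_pos : 0 < μ Q) (hQ_top : μ Q ≠ ∞) (hD : 0 < D)
    (hE : ∀ x ∈ E, ∃ B ∈ F, x ∈ B ∧ Q ⊆ B ∧ μ B < ENNReal.ofReal D) :
    μ E ≤ ENNReal.ofReal (C * D) := by
  have real_pos : 0 < μ.real Q := ENNReal.toReal_pos hQ_pos.ne' hQ_top
  have subset_level : E ⊆ {x | ENNReal.ofReal (μ.real Q / D)
      < maximalOp d μ F (Q.indicator 1) x} := by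
    intro x hx
    obtain ⟨B, hB, hxB, hQB, hμB⟩ := hE x hx
    calc ENNReal.ofReal (μ.real Q / D) = μ Q / ENNReal.ofReal D := by
          rw [ENNReal.ofReal_div_of_pos hD, ofReal_measureReal hQ_top]
      _ < μ Q / μ B :=
          (ENNReal.div_lt_div_iff_right hQ_pos.ne' hQ_top).2 hμB
      _ = μ (Q ∩ B) / μ B := by rw [Set.inter_eq_self_of_subset_left hQB]
      _ ≤ maximalOp d μ F (Q.indicator 1) x :=
          measure_inter_div_le_maximalOp_indicator hQ hB
            (hQ_pos.trans_le (measure_mono hQB)) hxB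
  have integrable_indicator : Integrable (Q.indicator (1 : (Fin d → ℝ) → ℝ)) μ :=
    (integrable_indicator_iff hQ).2 (integrableOn_const hQ_top)
  calc μ E ≤ _ := measure_mono subset_level
    _ ≤ ENNReal.ofReal (C / (μ.real Q / D)) * ∫⁻ x, ENNReal.ofReal |Q.indicator 1 x| ∂μ :=
        h _ integrable_indicator _ (div_pos real_pos hD)
    _ = ENNReal.ofReal (C / (μ.real Q / D)) * ENNReal.ofReal (μ.real Q) := by
        rw [← setLIntegral_univ, setLIntegral_abs_indicator_one hQ, Set.inter_univ,
          ofReal_measureReal hQ_top]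
    _ = ENNReal.ofReal (C * D) := by
        rw [← ENNReal.ofReal_mul' real_pos.le]
        congr 1
        field_simp

end MaximalOperator

section ExpMeasure

lemma integrable_exp_neg_abs : Integrable fun t : ℝ => Real.exp (-|t|) := by
  rw [← integrableOn_univ, ← Set.Iic_union_Ioi (a := (0 : ℝ))]
  refine .union ?_ ?_
  · refine (integrableOn_exp_Iic 0).congr_fun (fun t ht => ?_) measurableSet_Iic
    rw [abs_of_nonpos ht, neg_neg]
  · refine (integrableOn_exp_neg_Ioi 0).congr_fun (fun t ht => ?_) measurableSet_Ioi
    rw [abs_of_pos ht]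

lemma integrable_exp_neg_sum_abs (ι : Type*) [Fintype ι] :
    Integrable fun x : ι → ℝ => Real.exp (-∑ i, |x i|) := by
  simp_rw [← Finset.sum_neg_distrib, Real.exp_sum]
  exact Integrable.fintype_prod fun _ => integrable_exp_neg_abs

variable {d : ℕ}

instance : IsFiniteMeasure (expMeasure d) :=
  isFiniteMeasure_withDensity_ofReal (integrable_exp_neg_sum_abs (Fin d)).2

instance inst_s1 : (expMeasure d).IsOpenPosMeasure :=
  (withDensity_absolutelyContinuous' (Measurable.aemeasurable (by fun_prop))
    (.of_forall fun _ => (ENNReal.ofReal_pos.2 (Real.exp_pos _)).ne')).isOpenPosMeasure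

open scoped Pointwise in
lemma expMeasure_vadd_s1 {c : Fin d → ℝ} {s : Set (Fin d → ℝ)} (hs : MeasurableSet s)
    (habs : ∀ y ∈ s, ∀ i, |c i + y i| = |c i| + |y i|) :
    expMeasure d (c +ᵥ s) = ENNReal.ofReal (Real.exp (-∑ i, |c i|)) * expMeasure d s := by
  have density_add : ∀ y ∈ s, ENNReal.ofReal (Real.exp (-∑ i, |(c + y) i|)) =
      ENNReal.ofReal (Real.exp (-∑ i, |c i|)) * ENNReal.ofReal (Real.exp (-∑ i, |y i|)) := by
    intro y hy
    rw [← ENNReal.ofReal_mul (Real.exp_nonneg _), ← Real.exp_add, ← neg_add,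
      ← Finset.sum_add_distrib]
    simp only [Pi.add_apply, habs y hy]
  rw [expMeasure, withDensity_apply', withDensity_apply']
  calc ∫⁻ x in c +ᵥ s, ENNReal.ofReal (Real.exp (-∑ i, |x i|))
      = ∫⁻ y in s, ENNReal.ofReal (Real.exp (-∑ i, |(c + y) i|)) :=
        ((measurePreserving_add_left volume c).setLIntegral_comp_emb
          (measurableEmbedding_addLeft c) _ s).symm
    _ = ∫⁻ y in s, ENNReal.ofReal (Real.exp (-∑ i, |c i|)) *
          ENNReal.ofReal (Real.exp (-∑ i, |y i|)) := setLIntegral_congr_fun hs density_add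
    _ = _ := lintegral_const_mul _ (by fun_prop)

end ExpMeasure

section CornerCube

/-- The open cube `c + (0, s)^ι`. Its position is recorded by its lowest vertex `c` and its size by
its side length `s`, rather than by centre and radius: the measure of a cube in the positive orthant
is governed by its lowest vertex. -/
def cornerCube {ι : Type*} (c : ι → ℝ) (s : ℝ) : Set (ι → ℝ) :=
  Set.univ.pi fun i => Set.Ioo (c i) (c i + s)

variable {ι : Type*} {c c' : ι → ℝ} {s s' : ℝ}

lemma mem_cornerCube {x : ι → ℝ} : x ∈ cornerCube c s ↔ ∀ i, c i < x i ∧ x i < c i + s := by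
  simp [cornerCube]

lemma cornerCube_subset_cornerCube (hc : ∀ i, c i ≤ c' i) (hs : ∀ i, c' i + s' ≤ c i + s) :
    cornerCube c' s' ⊆ cornerCube c s :=
  Set.pi_mono fun i _ => Set.Ioo_subset_Ioo (hc i) (hs i)

lemma pairwise_disjoint_cornerCube_natCast :
    Pairwise (Function.onFun Disjoint fun k : ι → ℕ => cornerCube (fun i => (k i : ℝ)) 1) := by
  intro k l hkl
  refine Set.disjoint_left.2 fun x hxk hxl => hkl (funext fun i => ?_)
  obtain ⟨hk, hk'⟩ := mem_cornerCube.1 hxk i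
  obtain ⟨hl, hl'⟩ := mem_cornerCube.1 hxl i
  have k_lt : k i < l i + 1 := by exact_mod_cast hk.trans hl'
  have l_lt : l i < k i + 1 := by exact_mod_cast hl.trans hk'
  omega

open scoped Pointwise in
lemma vadd_cornerCube_zero (c : ι → ℝ) (s : ℝ) : c +ᵥ cornerCube 0 s = cornerCube c s := by
  ext x
  simp only [Set.mem_vadd_set_iff_neg_vadd_mem, mem_cornerCube, vadd_eq_add, Pi.add_apply,
    Pi.neg_apply, Pi.zero_apply, neg_add_lt_iff_lt_add, lt_neg_add_iff_add_lt, add_zero, zero_add]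

lemma measurableSet_cornerCube [Countable ι] : MeasurableSet (cornerCube c s) :=
  .univ_pi fun _ => measurableSet_Ioo

lemma isOpen_cornerCube [Finite ι] : IsOpen (cornerCube c s) :=
  isOpen_set_pi Set.finite_univ fun _ _ => isOpen_Ioo

lemma cornerCube_nonempty (hs : 0 < s) : (cornerCube c s).Nonempty :=
  Set.univ_pi_nonempty_iff.2 fun _ => Set.nonempty_Ioo.2 (lt_add_of_pos_right _ hs)

variable {d : ℕ} {c : Fin d → ℝ}

lemma cornerCube_mem_cubeBalls (hs : 0 < s) : cornerCube c s ∈ cubeBalls d := by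
  refine ⟨fun i => c i + s / 2, s / 2, half_pos hs, Set.ext fun x => ?_⟩
  simp only [mem_cornerCube, Set.mem_ofPred_eq, abs_lt]
  refine forall_congr' fun i => ?_
  constructor <;> rintro ⟨_, _⟩ <;> constructor <;> linarith

lemma expMeasure_cornerCube_pos (hs : 0 < s) : 0 < expMeasure d (cornerCube c s) :=
  isOpen_cornerCube.measure_pos _ (cornerCube_nonempty hs)

lemma expMeasure_cornerCube (hc : ∀ i, 0 ≤ c i) :
    expMeasure d (cornerCube c s) =
      ENNReal.ofReal (Real.exp (-∑ i, c i)) * expMeasure d (cornerCube 0 s) := by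
  rw [← vadd_cornerCube_zero, expMeasure_vadd_s1 measurableSet_cornerCube]
  · simp only [abs_of_nonneg (hc _)]
  · intro y hy i
    have y_pos : 0 < y i := (mem_cornerCube.1 hy i).1
    rw [abs_of_nonneg (hc i), abs_of_pos y_pos, abs_of_nonneg (add_nonneg (hc i) y_pos.le)]

end CornerCube

section LatticePoints

lemma lt_card_piAntidiag_univ (ι : Type*) [Fintype ι] [DecidableEq ι] [Nontrivial ι] (n : ℕ) :
    n < (Finset.univ.piAntidiag n : Finset (ι → ℕ)).card := by
  obtain ⟨i, j, hij⟩ := exists_pair_ne ι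
  let point (k : ℕ) : ι → ℕ := Pi.single i k + Pi.single j (n - k)
  have point_mem : ∀ k ∈ Finset.range (n + 1), point k ∈ Finset.univ.piAntidiag n := by
    intro k hk
    have : k + (n - k) = n := by grind
    simpa [point, Finset.sum_add_distrib] using this
  have point_injOn : Set.InjOn point (Finset.range (n + 1)) := by
    intro k _ l _ hkl
    simpa [point, hij] using congrFun hkl i
  simpa using Finset.card_le_card_of_injOn point point_mem point_injOn

variable {d n : ℕ}

lemma expMeasure_cornerCube_of_mem_piAntidiag {k : Fin d → ℕ}
    (hk : k ∈ Finset.univ.piAntidiag n) (s : ℝ) :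
    expMeasure d (cornerCube (fun i => (k i : ℝ)) s) =
      ENNReal.ofReal (Real.exp (-n)) * expMeasure d (cornerCube 0 s) := by
  rw [expMeasure_cornerCube fun i => (k i).cast_nonneg, ← Nat.cast_sum,
    (Finset.mem_piAntidiag.1 hk).1]

lemma expMeasure_biUnion_cornerCube_piAntidiag (d n : ℕ) :
    expMeasure d (⋃ k ∈ Finset.univ.piAntidiag n, cornerCube (fun i => (k i : ℝ)) 1) =
      (Finset.univ.piAntidiag n : Finset (Fin d → ℕ)).card *
        (ENNReal.ofReal (Real.exp (-n)) * expMeasure d (cornerCube 0 1)) := by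
  rw [measure_biUnion_finset (fun k _ l _ hkl => pairwise_disjoint_cornerCube_natCast hkl)
      fun _ _ => measurableSet_cornerCube,
    Finset.sum_congr rfl fun k hk => expMeasure_cornerCube_of_mem_piAntidiag hk 1,
    Finset.sum_const, nsmul_eq_mul]

lemma HasWeakTypeOneOneWith.card_piAntidiag_mul_le {C K : ℝ}
    (h : HasWeakTypeOneOneWith d (expMeasure d) (cubeBalls d) C)
    (hK : expMeasure d Set.univ < ENNReal.ofReal K) (n : ℕ) :
    (Finset.univ.piAntidiag n : Finset (Fin d → ℕ)).card * expMeasure d (cornerCube 0 1) ≤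
      ENNReal.ofReal (C * K) := by
  have exp_pos : 0 < ENNReal.ofReal (Real.exp (-n)) := ENNReal.ofReal_pos.2 (Real.exp_pos _)
  have K_pos : 0 < K := ENNReal.ofReal_pos.1 (bot_le.trans_lt hK)
  have union_le : expMeasure d
      (⋃ k ∈ Finset.univ.piAntidiag n, cornerCube (fun i => (k i : ℝ)) 1) ≤
        ENNReal.ofReal (C * (Real.exp (-n) * K)) := by
    refine h.measure_le (Q := cornerCube (fun _ => (n : ℝ)) 1) measurableSet_cornerCube
      (expMeasure_cornerCube_pos one_pos) (measure_ne_top _ _) (mul_pos (Real.exp_pos _) K_pos)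
      fun x hx => ?_
    obtain ⟨k, hk, hxk⟩ := Set.mem_iUnion₂.1 hx
    have k_nonneg (i : Fin d) : (0 : ℝ) ≤ k i := (k i).cast_nonneg
    have k_le (i : Fin d) : (k i : ℝ) ≤ n := by
      rw [← (Finset.mem_piAntidiag.1 hk).1]
      exact_mod_cast Finset.single_le_sum_of_canonicallyOrdered (Finset.mem_univ i)
    refine ⟨cornerCube (fun i => k i) (n + 1), cornerCube_mem_cubeBalls (by positivity),
      cornerCube_subset_cornerCube (fun _ => le_rfl) (fun i => by linarith) hxk,
      cornerCube_subset_cornerCube k_le (fun i => by linarith [k_nonneg i]), ?_⟩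
    rw [expMeasure_cornerCube_of_mem_piAntidiag hk, ENNReal.ofReal_mul (Real.exp_nonneg _)]
    exact ENNReal.mul_lt_mul_right exp_pos.ne' ENNReal.ofReal_ne_top
      ((measure_mono (Set.subset_univ _)).trans_lt hK)
  rw [expMeasure_biUnion_cornerCube_piAntidiag, mul_left_comm, mul_left_comm C,
    ENNReal.ofReal_mul (Real.exp_nonneg _)] at union_le
  exact (ENNReal.mul_le_mul_iff_right exp_pos.ne' ENNReal.ofReal_ne_top).1 union_le

end LatticePoints

/-- For `d ≥ 2`, the non-centered maximal operator `M_μ^𝓠` associated with the exponential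
measure `μ` and the family of open cubes (ℓ^∞ balls) is not of weak type (1,1) w.r.t. `μ`. -/
theorem cube_maximal_not_weak_type_one_one (d : ℕ) (hd : 2 ≤ d) :
    ¬ ∃ C : ℝ, 0 < C ∧
      ∀ f : (Fin d → ℝ) → ℝ, Integrable f (expMeasure d) →
        ∀ lam : ℝ, 0 < lam →
          expMeasure d {x | ENNReal.ofReal lam
              < maximalOp d (expMeasure d) (cubeBalls d) f x}
            ≤ ENNReal.ofReal (C / lam) * ∫⁻ x, ENNReal.ofReal |f x| ∂(expMeasure d) := by
  rintro ⟨C, -, hC : HasWeakTypeOneOneWith d (expMeasure d) (cubeBalls d) C⟩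
  have : Nontrivial (Fin d) := Fin.nontrivial_iff_two_le.2 hd
  obtain ⟨K, hK⟩ : ∃ K : ℝ, expMeasure d Set.univ < ENNReal.ofReal K := by
    obtain ⟨K, hK⟩ := ENNReal.lt_iff_exists_nnreal_btwn.1 (measure_lt_top (expMeasure d) Set.univ)
    exact ⟨K, by simpa using hK.1⟩
  obtain ⟨n, hn⟩ : ∃ n : ℕ, ENNReal.ofReal (C * K) < n * expMeasure d (cornerCube 0 1) :=
    ENNReal.exists_nat_mul_gt (expMeasure_cornerCube_pos one_pos).ne' ENNReal.ofReal_ne_top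
  refine hn.not_ge (le_trans ?_ (hC.card_piAntidiag_mul_le hK n))
  gcongr
  exact (lt_card_piAntidiag_univ (Fin d) n).le
end

section
/- Let d ≥ 1 and q ∈ {1, 2, ∞}. The non-centered maximal operator M_μ^{(q)} on ℝ^d (supremum over open ℓ^q balls in ℝ^d) is of weak type (1,1) with respect to (ℝ^d, dμ) if and only if the restricted non-centered maximal operator M_μ^{(q),+} on ℝ^d_+ (supremum over the sets E_q(z,r) = {y ∈ ℝ^d_+ : |z − y|_q < r} with z ∈ ℝ^d_+) is of weak type (1,1) with respect to (ℝ^d_+, dμ). -/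
open MeasureTheory ENNReal

/-- The ℓ¹ norm on `ℝ^d`. -/
noncomputable def l1norm (d : ℕ) (x : Fin d → ℝ) : ℝ := ∑ i, |x i|

/-- The ℓ² (Euclidean) norm on `ℝ^d`. -/
noncomputable def l2norm (d : ℕ) (x : Fin d → ℝ) : ℝ := Real.sqrt (∑ i, (x i) ^ 2)

/-- The ℓ^∞ norm on `ℝ^d` (the sup norm of the pi type). -/
noncomputable def linfnorm (d : ℕ) (x : Fin d → ℝ) : ℝ := ‖x‖

/-- The positive orthant `ℝ^d_+ = (0,∞)^d`. -/
def posOrthant (d : ℕ) : Set (Fin d → ℝ) := {x | ∀ i, 0 < x i}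

/-- The family of open balls `{y : N (z - y) < r}` of `ℝ^d` for the norm `N`. -/
def fullBalls (d : ℕ) (N : (Fin d → ℝ) → ℝ) : Set (Set (Fin d → ℝ)) :=
  {B | ∃ (z : Fin d → ℝ) (r : ℝ), 0 < r ∧ B = {y | N (z - y) < r}}

/-- The family of metric balls `E(z,r) = {y ∈ ℝ^d_+ : N (z - y) < r}`, `z ∈ ℝ^d_+`, of the
subspace `ℝ^d_+` for the norm `N`. -/
def plusBalls (d : ℕ) (N : (Fin d → ℝ) → ℝ) : Set (Set (Fin d → ℝ)) :=
  {B | ∃ (z : Fin d → ℝ) (r : ℝ), z ∈ posOrthant d ∧ 0 < r ∧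
    B = {y | y ∈ posOrthant d ∧ N (z - y) < r}}

open scoped Topology Pointwise

/-!
Up to a null set, the `2 ^ d` sign changes of the coordinates tile `ℝ^d` by copies of the positive
orthant: the orthant is a fundamental domain for the group `{±1}^d`, which preserves the measure and
permutes the balls. Folding `x ↦ |x|` does not increase distances, so each piece of the ball
`B(z, r)` folds into `E(|z|, r)`. Hence `μ (B(z, r)) ≤ 2 ^ d * μ (E(z, r))` for `z` in the orthant,
which bounds the restricted operator by the full one acting on `f` extended by zero. Conversely,
the average of `|f|` over `B(z, r)` is at most the average over `E(|z|, r)` of the sum of the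
reflections of `|f|`, whose integral over the orthant is that of `|f|` over `ℝ^d`.
-/

section WeakType

variable {α β : Type*} [MeasurableSpace α] [MeasurableSpace β]

/-- The operator `T` is of weak type (1,1) with respect to `μ`. Values of `T` lie in `[0, ∞]`, so
that maximal functions need no finiteness convention. -/
def WeakTypeOneOne (μ : Measure α) (T : (α → ℝ) → α → ℝ≥0∞) : Prop :=
  ∃ C : ℝ, 0 < C ∧ ∀ f : α → ℝ, Integrable f μ → ∀ t : ℝ, 0 < t →
    μ {x | ENNReal.ofReal t < T f x}
      ≤ ENNReal.ofReal (C / t) * ∫⁻ x, ENNReal.ofReal |f x| ∂μ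

theorem WeakTypeOneOne.transfer {μ : Measure α} {ν : Measure β} {T : (α → ℝ) → α → ℝ≥0∞}
    {S : (β → ℝ) → β → ℝ≥0∞} (hT : WeakTypeOneOne μ T) (A : (β → ℝ) → α → ℝ) {a b : ℝ}
    (ha : 0 < a) (hb : 0 < b)
    (integrable : ∀ f, Integrable f ν → Integrable (A f) μ)
    (lintegral_le : ∀ f, Integrable f ν →
      ∫⁻ x, ENNReal.ofReal |A f x| ∂μ ≤ ∫⁻ y, ENNReal.ofReal |f y| ∂ν)
    (distribution_le : ∀ f, Integrable f ν → ∀ t : ℝ, 0 < t →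
      ν {y | ENNReal.ofReal t < S f y}
        ≤ ENNReal.ofReal a * μ {x | ENNReal.ofReal (t / b) < T (A f) x}) :
    WeakTypeOneOne ν S := by
  obtain ⟨C, hC, hT⟩ := hT
  refine ⟨a * b * C, by positivity, fun f hf t ht => ?_⟩
  calc ν {y | ENNReal.ofReal t < S f y}
      ≤ ENNReal.ofReal a * μ {x | ENNReal.ofReal (t / b) < T (A f) x} := distribution_le f hf t ht
    _ ≤ ENNReal.ofReal a *
          (ENNReal.ofReal (C / (t / b)) * ∫⁻ x, ENNReal.ofReal |A f x| ∂μ) := by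
        gcongr
        exact hT _ (integrable f hf) _ (div_pos ht hb)
    _ ≤ ENNReal.ofReal a *
          (ENNReal.ofReal (C / (t / b)) * ∫⁻ y, ENNReal.ofReal |f y| ∂ν) := by
        gcongr
        exact lintegral_le f hf
    _ = ENNReal.ofReal (a * b * C / t) * ∫⁻ y, ENNReal.ofReal |f y| ∂ν := by
        rw [← mul_assoc, ← ENNReal.ofReal_mul ha.le]
        congr 2
        field_simp

theorem setLIntegral_abs_indicator {μ : Measure α} {s t : Set α} (hs : MeasurableSet s)
    (f : α → ℝ) :
    ∫⁻ y in t, ENNReal.ofReal |s.indicator f y| ∂μ = ∫⁻ y in s ∩ t, ENNReal.ofReal |f y| ∂μ := by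
  rw [← setLIntegral_indicator hs]
  congr 1 with y
  by_cases hy : y ∈ s <;> simp [hy]

end WeakType

section SolidSeminorm

variable {ι : Type*}

/-- A seminorm on `ℝ^ι` is solid if it is monotone in the absolute values of the coordinates. This
is what makes the balls compatible with the folding `x ↦ |x|` onto the positive orthant. -/
def IsSolidSeminorm (p : Seminorm ℝ (ι → ℝ)) : Prop :=
  ∀ ⦃x y : ι → ℝ⦄, |x| ≤ |y| → p x ≤ p y

/-- The `ℓ^q` norm on `ℝ^ι`, as a seminorm on the plain function space. -/
noncomputable def lpSeminorm (ι : Type*) [Fintype ι] (q : ℝ≥0∞) [Fact (1 ≤ q)] :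
    Seminorm ℝ (ι → ℝ) :=
  (normSeminorm ℝ (PiLp q fun _ : ι => ℝ)).comp (WithLp.linearEquiv q ℝ (ι → ℝ)).symm.toLinearMap

variable [Fintype ι]

theorem lpSeminorm_apply (q : ℝ≥0∞) [Fact (1 ≤ q)] (x : ι → ℝ) :
    lpSeminorm ι q x = ‖WithLp.toLp q x‖ := rfl

theorem isSolidSeminorm_lpSeminorm (q : ℝ≥0∞) [Fact (1 ≤ q)] :
    IsSolidSeminorm (lpSeminorm ι q) := by
  intro x y hxy
  have hxy : ∀ i, ‖x i‖ ≤ ‖y i‖ := hxy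
  simp only [lpSeminorm_apply]
  rcases eq_or_ne q ∞ with rfl | hq
  · rw [PiLp.norm_toLp, PiLp.norm_toLp, pi_norm_le_iff_of_nonneg (norm_nonneg y)]
    exact fun i => (hxy i).trans (norm_le_pi_norm y i)
  · have hq_pos : 0 < q.toReal :=
      ENNReal.toReal_pos (zero_lt_one.trans_le (Fact.out : 1 ≤ q)).ne' hq
    rw [PiLp.norm_eq_sum hq_pos, PiLp.norm_eq_sum hq_pos]
    gcongr with i
    exact hxy i

theorem coe_lpSeminorm_one (d : ℕ) : ⇑(lpSeminorm (Fin d) 1) = l1norm d := by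
  funext x
  simp [lpSeminorm_apply, l1norm, PiLp.norm_eq_of_L1]

theorem coe_lpSeminorm_two (d : ℕ) : ⇑(lpSeminorm (Fin d) 2) = l2norm d := by
  funext x
  simp [lpSeminorm_apply, l2norm, PiLp.norm_eq_of_L2]

theorem coe_lpSeminorm_top (d : ℕ) : ⇑(lpSeminorm (Fin d) ∞) = linfnorm d := by
  funext x
  simp [lpSeminorm_apply, linfnorm]

end SolidSeminorm

section SeminormBalls

variable {E : Type*} [AddCommGroup E] [Module ℝ E] (p : Seminorm ℝ E) {z x : E} {r : ℝ}

theorem setOf_seminorm_sub_lt (z : E) (r : ℝ) :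
    {y | p (z - y) < r} = p.ball z r := by
  ext y
  rw [Seminorm.mem_ball, map_sub_rev, Set.mem_ofPred_eq]

theorem seminorm_ball_add_smul_subset (z v : E) (r : ℝ) {s t : ℝ} (hst : s ≤ t) :
    p.ball (z + t • v) (r - t * p v) ⊆ p.ball (z + s • v) (r - s * p v) := by
  intro y hy
  rw [Seminorm.mem_ball] at hy ⊢
  calc p (y - (z + s • v)) = p (y - (z + t • v) + (t - s) • v) := by congr 1; module
    _ ≤ p (y - (z + t • v)) + p ((t - s) • v) := map_add_le_add p _ _
    _ = p (y - (z + t • v)) + (t - s) * p v := by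
        rw [map_smul_eq_mul, Real.norm_of_nonneg (sub_nonneg.2 hst)]
    _ < r - s * p v := by linarith

theorem eventually_mem_seminorm_ball_add_smul (v : E) (hx : x ∈ p.ball z r) :
    ∀ᶠ t in 𝓝[>] (0 : ℝ), x ∈ p.ball (z + t • v) (r - t * p v) := by
  rw [Seminorm.mem_ball] at hx
  have hlim : Filter.Tendsto (fun t : ℝ => p (x - z) + 2 * t * p v) (𝓝[>] 0) (𝓝 (p (x - z))) := by
    refine (Continuous.tendsto' (by fun_prop) _ _ ?_).mono_left nhdsWithin_le_nhds
    simp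
  filter_upwards [hlim.eventually_lt_const hx, self_mem_nhdsWithin] with t ht ht_pos
  have h : p (x - (z + t • v)) ≤ p (x - z) + t * p v :=
    calc p (x - (z + t • v)) = p (x - z - t • v) := by rw [sub_sub]
      _ ≤ p (x - z) + p (t • v) := map_sub_le_add p _ _
      _ = p (x - z) + t * p v := by rw [map_smul_eq_mul, Real.norm_of_nonneg (le_of_lt ht_pos)]
  rw [Seminorm.mem_ball]
  linarith

theorem exists_seq_seminorm_ball_eq_iUnion (v : E) (hx : x ∈ p.ball z r) :
    ∃ u : ℕ → ℝ, (∀ n, 0 < u n) ∧ (∀ n, x ∈ p.ball (z + u n • v) (r - u n * p v)) ∧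
      Monotone (fun n => p.ball (z + u n • v) (r - u n * p v)) ∧
      ⋃ n, p.ball (z + u n • v) (r - u n * p v) = p.ball z r := by
  obtain ⟨t, hxt, ht⟩ :=
    ((eventually_mem_seminorm_ball_add_smul p v hx).and self_mem_nhdsWithin).exists
  obtain ⟨u, hu_anti, hu_mem, hu_lim⟩ := exists_seq_strictAnti_tendsto' (Set.mem_Ioi.1 ht : 0 < t)
  refine ⟨u, fun n => (hu_mem n).1,
    fun n => seminorm_ball_add_smul_subset p z v r (hu_mem n).2.le hxt,
    fun m n hmn => seminorm_ball_add_smul_subset p z v r (hu_anti.antitone hmn),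
    (Set.iUnion_subset fun n => ?_).antisymm fun y hy => Set.mem_iUnion.2 ?_⟩
  · simpa using seminorm_ball_add_smul_subset p z v r (hu_mem n).1.le
  · have hu : Filter.Tendsto u Filter.atTop (𝓝[>] 0) :=
      tendsto_nhdsWithin_iff.2 ⟨hu_lim, .of_forall fun n => (hu_mem n).1⟩
    exact (hu.eventually (eventually_mem_seminorm_ball_add_smul p v hy)).exists

end SeminormBalls

section SignChanges

variable {ι : Type*}

theorem abs_sign_smul (σ : ι → ℤˣ) (x : ι → ℝ) : |σ • x| = |x| := by
  funext i
  rcases Int.units_eq_one_or (σ i) with h | h <;> simp [h, Units.smul_def]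

theorem exists_sign_smul_eq_abs (x : ι → ℝ) : ∃ σ : ι → ℤˣ, σ • x = |x| := by
  have (i : ι) : ∃ u : ℤˣ, u • x i = |x i| := by
    rcases abs_choice (x i) with h | h
    · exact ⟨1, by rw [h, one_smul]⟩
    · exact ⟨-1, by simp [h, Units.smul_def]⟩
  choose σ hσ using this
  exact ⟨σ, funext hσ⟩

theorem IsSolidSeminorm.sign_smul_mem_ball_abs {p : Seminorm ℝ (ι → ℝ)} (hp : IsSolidSeminorm p)
    {z x : ι → ℝ} {r : ℝ} (σ : ι → ℤˣ) (hx : 0 ≤ σ • x) (hxz : x ∈ p.ball z r) :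
    σ • x ∈ p.ball |z| r := by
  have h : |σ • x - abs z| ≤ |x - z| := by
    rw [← abs_of_nonneg hx, abs_sign_smul]
    exact abs_abs_sub_abs_le x z
  exact (hp h).trans_lt hxz

theorem IsSolidSeminorm.preimage_sign_smul_ball {p : Seminorm ℝ (ι → ℝ)} (hp : IsSolidSeminorm p)
    (σ : ι → ℤˣ) (z : ι → ℝ) (r : ℝ) :
    (σ • ·) ⁻¹' p.ball (σ • z) r = p.ball z r := by
  ext x
  have h : |σ • (x - z)| = |x - z| := abs_sign_smul σ (x - z)
  have : p (σ • (x - z)) = p (x - z) := (hp h.le).antisymm (hp h.ge)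
  simp [Seminorm.mem_ball, ← smul_sub, this]

theorem IsSolidSeminorm.measure_ball_abs {p : Seminorm ℝ (ι → ℝ)} (hp : IsSolidSeminorm p)
    (μ : Measure (ι → ℝ)) [SMulInvariantMeasure (ι → ℤˣ) (ι → ℝ) μ]
    (z : ι → ℝ) (r : ℝ) : μ (p.ball |z| r) = μ (p.ball z r) := by
  obtain ⟨σ, hσ⟩ := exists_sign_smul_eq_abs z
  rw [← hσ, ← measure_preimage_smul μ σ (p.ball (σ • z) r), hp.preimage_sign_smul_ball]

end SignChanges

section Orthant

variable {d : ℕ}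

theorem measurableSet_posOrthant (d : ℕ) : MeasurableSet (posOrthant d) := by
  have h : posOrthant d = ⋂ i, {x | 0 < x i} := by ext; simp [posOrthant]
  rw [h]
  exact MeasurableSet.iInter fun i => measurableSet_lt measurable_const (measurable_pi_apply i)

theorem disjoint_sign_smul_posOrthant {σ : Fin d → ℤˣ} (hσ : σ ≠ 1) :
    Disjoint (σ • posOrthant d) (posOrthant d) := by
  obtain ⟨i, hi⟩ := Function.ne_iff.1 hσ
  refine Set.disjoint_left.2 ?_
  rintro _ ⟨x, hx, rfl⟩ hσx
  have hσi : σ i = -1 := (Int.units_eq_one_or (σ i)).resolve_left hi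
  have h : 0 < -x i := by simpa [hσi, Units.smul_def] using hσx i
  linarith [hx i]

variable {μ : Measure (Fin d → ℝ)} [SMulInvariantMeasure (Fin d → ℤˣ) (Fin d → ℝ) μ]

theorem isFundamentalDomain_posOrthant (hμ : ∀ᵐ x ∂μ, ∀ i, x i ≠ 0) :
    IsFundamentalDomain (Fin d → ℤˣ) (posOrthant d) μ := by
  refine .mk'' (measurableSet_posOrthant d).nullMeasurableSet ?_
    (fun σ hσ => (disjoint_sign_smul_posOrthant hσ).aedisjoint)
    fun σ => (measurePreserving_smul σ μ).quasiMeasurePreserving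
  filter_upwards [hμ] with x hx
  obtain ⟨σ, hσ⟩ := exists_sign_smul_eq_abs x
  refine ⟨σ, fun i => ?_⟩
  rw [hσ]
  exact abs_pos.2 (hx i)

theorem IsSolidSeminorm.setLIntegral_ball_le {p : Seminorm ℝ (Fin d → ℝ)} (hp : IsSolidSeminorm p)
    (hμ : ∀ᵐ x ∂μ, ∀ i, x i ≠ 0) (g : (Fin d → ℝ) → ℝ≥0∞) (z : Fin d → ℝ) (r : ℝ) :
    ∫⁻ x in p.ball z r, g x ∂μ
      ≤ ∑ σ : Fin d → ℤˣ, ∫⁻ x in posOrthant d ∩ p.ball |z| r, g (σ • x) ∂μ := by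
  rw [(isFundamentalDomain_posOrthant hμ).setLIntegral_eq_tsum', tsum_fintype,
    ← Equiv.sum_comp (Equiv.inv (Fin d → ℤˣ))]
  simp only [Equiv.inv_apply, inv_inv]
  refine Finset.sum_le_sum fun σ _ => lintegral_mono_set ?_
  rintro _ ⟨⟨x, hx, rfl⟩, hσx⟩
  exact ⟨hσx, hp.sign_smul_mem_ball_abs _ (fun i => (hσx i).le) hx⟩

theorem IsSolidSeminorm.measure_ball_le {p : Seminorm ℝ (Fin d → ℝ)} (hp : IsSolidSeminorm p)
    (hμ : ∀ᵐ x ∂μ, ∀ i, x i ≠ 0) (z : Fin d → ℝ) (r : ℝ) :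
    μ (p.ball z r) ≤ 2 ^ d * μ (posOrthant d ∩ p.ball |z| r) := by
  simpa using hp.setLIntegral_ball_le hμ 1 z r

end Orthant

section MaximalOperator

variable {d : ℕ} {p : Seminorm ℝ (Fin d → ℝ)} {μ : Measure (Fin d → ℝ)} {f : (Fin d → ℝ) → ℝ}
  {x : Fin d → ℝ}

theorem mem_fullBalls_iff {B : Set (Fin d → ℝ)} :
    B ∈ fullBalls d p ↔ ∃ (z : Fin d → ℝ) (r : ℝ), 0 < r ∧ B = p.ball z r := by
  simp only [fullBalls, setOf_seminorm_sub_lt, Set.mem_ofPred_eq]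

theorem mem_plusBalls_iff {B : Set (Fin d → ℝ)} :
    B ∈ plusBalls d p ↔ ∃ (z : Fin d → ℝ) (r : ℝ), z ∈ posOrthant d ∧ 0 < r ∧
      B = posOrthant d ∩ p.ball z r := by
  simp only [plusBalls, ← setOf_seminorm_sub_lt, Set.mem_ofPred_eq]
  rfl

theorem average_le_maximalOp {F : Set (Set (Fin d → ℝ))} {B : Set (Fin d → ℝ)} (hB : B ∈ F)
    (hx : x ∈ B) : (∫⁻ y in B, ENNReal.ofReal |f y| ∂μ) / μ B ≤ maximalOp d μ F f x := by
  rcases eq_or_ne (μ B) 0 with h | h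
  · simp [Measure.restrict_eq_zero.2 h]
  · exact le_iSup₂_of_le B hB (le_iSup₂_of_le hx h.bot_lt le_rfl)

/-- The centre `z` may lie on the boundary of the orthant, where `plusBalls` has no ball: shrinking
the ball while moving its centre along `(1, …, 1)` exhausts it by members of `plusBalls`. -/
theorem average_le_maximalOp_plusBalls {z : Fin d → ℝ} {r : ℝ} (hz : 0 ≤ z)
    (hx : x ∈ posOrthant d ∩ p.ball z r) :
    (∫⁻ y in posOrthant d ∩ p.ball z r, ENNReal.ofReal |f y| ∂μ) / μ (posOrthant d ∩ p.ball z r)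
      ≤ maximalOp d μ (plusBalls d p) f x := by
  obtain ⟨u, hu_pos, hxu, hu_mono, hu_iUnion⟩ := exists_seq_seminorm_ball_eq_iUnion p 1 hx.2
  set B : ℕ → Set (Fin d → ℝ) := fun n => posOrthant d ∩ p.ball (z + u n • 1) (r - u n * p 1)
  have hB_mono : Monotone B := fun m n hmn => Set.inter_subset_inter_right _ (hu_mono hmn)
  have hB_iUnion : ⋃ n, B n = posOrthant d ∩ p.ball z r := by
    rw [← Set.inter_iUnion, hu_iUnion]
  have hB_mem (n : ℕ) : B n ∈ plusBalls d p := by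
    have hr : 0 < r - u n * p 1 := (apply_nonneg p _).trans_lt ((p.mem_ball).1 (hxu n))
    refine mem_plusBalls_iff.2 ⟨_, _, fun i => ?_, hr, rfl⟩
    simpa using add_pos_of_nonneg_of_pos (hz i) (hu_pos n)
  rw [← hB_iUnion, setLIntegral_iUnion_of_directed _ hB_mono.directed_le, ENNReal.iSup_div]
  refine iSup_le fun n => ?_
  calc (∫⁻ y in B n, ENNReal.ofReal |f y| ∂μ) / μ (⋃ n, B n)
      ≤ (∫⁻ y in B n, ENNReal.ofReal |f y| ∂μ) / μ (B n) :=
        ENNReal.div_le_div_left (measure_mono (Set.subset_iUnion B n)) _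
    _ ≤ maximalOp d μ (plusBalls d p) f x := average_le_maximalOp (hB_mem n) ⟨hx.1, hxu n⟩

variable [SMulInvariantMeasure (Fin d → ℤˣ) (Fin d → ℝ) μ]

theorem IsSolidSeminorm.maximalOp_plusBalls_le (hp : IsSolidSeminorm p)
    (hμ : ∀ᵐ x ∂μ, ∀ i, x i ≠ 0) (f : (Fin d → ℝ) → ℝ) (x : Fin d → ℝ) :
    maximalOp d (μ.restrict (posOrthant d)) (plusBalls d p) f x
      ≤ 2 ^ d * maximalOp d μ (fullBalls d p) ((posOrthant d).indicator f) x := by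
  refine iSup₂_le fun B hB => iSup₂_le fun hxB _ => ?_
  obtain ⟨z, r, hz, hr, rfl⟩ := mem_plusBalls_iff.1 hB
  have hz_abs : |z| = z := abs_of_nonneg fun i => (hz i).le
  set I := ∫⁻ y in posOrthant d ∩ p.ball z r, ENNReal.ofReal |f y| ∂μ with hI
  rw [Measure.restrict_restrict_of_subset Set.inter_subset_left,
    Measure.restrict_eq_self _ Set.inter_subset_left, ← hI]
  calc I / μ (posOrthant d ∩ p.ball z r)
      = 2 ^ d * (I / (2 ^ d * μ (posOrthant d ∩ p.ball z r))) := by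
        rw [← mul_div_assoc, ENNReal.mul_div_mul_left _ _ (by simp) (by simp)]
    _ ≤ 2 ^ d * (I / μ (p.ball z r)) := by
        gcongr
        simpa [hz_abs] using hp.measure_ball_le hμ z r
    _ ≤ 2 ^ d * maximalOp d μ (fullBalls d p) ((posOrthant d).indicator f) x := by
        gcongr
        rw [hI, ← setLIntegral_abs_indicator (measurableSet_posOrthant d)]
        exact average_le_maximalOp (mem_fullBalls_iff.2 ⟨z, r, hr, rfl⟩) hxB.2

/-- The sum of `|f|` over all sign changes of the argument, through which `|f|` on the whole space
is controlled by a function on the positive orthant. -/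
def signSum (f : (Fin d → ℝ) → ℝ) (x : Fin d → ℝ) : ℝ := ∑ σ : Fin d → ℤˣ, |f (σ • x)|

theorem ofReal_abs_signSum (f : (Fin d → ℝ) → ℝ) (x : Fin d → ℝ) :
    ENNReal.ofReal |signSum f x| = ∑ σ : Fin d → ℤˣ, ENNReal.ofReal |f (σ • x)| := by
  have h_nonneg (σ : Fin d → ℤˣ) : 0 ≤ |f (σ • x)| := abs_nonneg _
  rw [signSum, abs_of_nonneg (Finset.sum_nonneg fun σ _ => h_nonneg σ),
    ENNReal.ofReal_sum_of_nonneg fun σ _ => h_nonneg σ]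

theorem integrable_signSum (hf : Integrable f μ) : Integrable (signSum f) μ :=
  integrable_finsetSum _ fun σ _ =>
    ((measurePreserving_smul σ μ).integrable_comp_of_integrable hf).abs

theorem setLIntegral_signSum (hf : AEMeasurable f μ) (s : Set (Fin d → ℝ)) :
    ∫⁻ x in s, ENNReal.ofReal |signSum f x| ∂μ
      = ∑ σ : Fin d → ℤˣ, ∫⁻ x in s, ENNReal.ofReal |f (σ • x)| ∂μ := by
  have hfσ (σ : Fin d → ℤˣ) : AEMeasurable (fun x => ENNReal.ofReal |f (σ • x)|) μ :=
    (hf.comp_quasiMeasurePreserving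
      (measurePreserving_smul σ μ).quasiMeasurePreserving).abs.ennreal_ofReal
  simp only [ofReal_abs_signSum]
  exact lintegral_finsetSum' _ fun σ _ => (hfσ σ).restrict

theorem setLIntegral_posOrthant_signSum (hμ : ∀ᵐ x ∂μ, ∀ i, x i ≠ 0) (hf : AEMeasurable f μ) :
    ∫⁻ x in posOrthant d, ENNReal.ofReal |signSum f x| ∂μ = ∫⁻ x, ENNReal.ofReal |f x| ∂μ := by
  rw [setLIntegral_signSum hf, (isFundamentalDomain_posOrthant hμ).lintegral_eq_tsum'',
    tsum_fintype]

theorem IsSolidSeminorm.maximalOp_fullBalls_sign_smul_le (hp : IsSolidSeminorm p)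
    (hμ : ∀ᵐ x ∂μ, ∀ i, x i ≠ 0) (hf : AEMeasurable f μ) (σ : Fin d → ℤˣ)
    (hx : x ∈ posOrthant d) :
    maximalOp d μ (fullBalls d p) f (σ • x)
      ≤ maximalOp d (μ.restrict (posOrthant d)) (plusBalls d p) (signSum f) x := by
  refine iSup₂_le fun B hB => iSup₂_le fun hxB _ => ?_
  obtain ⟨z, r, -, rfl⟩ := mem_fullBalls_iff.1 hB
  have hx_ball : x ∈ posOrthant d ∩ p.ball |z| r := by
    have hx_nonneg : 0 ≤ σ⁻¹ • σ • x := by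
      rw [inv_smul_smul]
      exact fun i => (hx i).le
    exact ⟨hx, by simpa using hp.sign_smul_mem_ball_abs σ⁻¹ hx_nonneg hxB⟩
  have h_integral : ∫⁻ y in p.ball z r, ENNReal.ofReal |f y| ∂μ
      ≤ ∫⁻ y in posOrthant d ∩ p.ball |z| r, ENNReal.ofReal |signSum f y| ∂μ := by
    rw [setLIntegral_signSum hf]
    exact hp.setLIntegral_ball_le hμ _ z r
  have h_measure : μ (posOrthant d ∩ p.ball |z| r) ≤ μ (p.ball z r) :=
    (measure_mono Set.inter_subset_right).trans_eq (hp.measure_ball_abs μ z r)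
  refine (ENNReal.div_le_div h_integral h_measure).trans ?_
  have h_average := average_le_maximalOp_plusBalls (μ := μ.restrict (posOrthant d))
    (f := signSum f) (abs_nonneg z) hx_ball
  rwa [Measure.restrict_restrict_of_subset Set.inter_subset_left,
    Measure.restrict_eq_self _ Set.inter_subset_left] at h_average

theorem measure_le_of_sign_smul_mem (hμ : ∀ᵐ x ∂μ, ∀ i, x i ≠ 0) {s t : Set (Fin d → ℝ)}
    (hst : ∀ σ : Fin d → ℤˣ, ∀ x ∈ posOrthant d, σ • x ∈ s → x ∈ t) :
    μ s ≤ 2 ^ d * μ.restrict (posOrthant d) t := by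
  rw [(isFundamentalDomain_posOrthant hμ).measure_eq_tsum, tsum_fintype,
    Measure.restrict_apply' (measurableSet_posOrthant d)]
  have h (σ : Fin d → ℤˣ) : μ (σ • s ∩ posOrthant d) ≤ μ (t ∩ posOrthant d) :=
    measure_mono fun x hx =>
      ⟨hst σ⁻¹ x hx.2 (Set.mem_smul_set_iff_inv_smul_mem.1 hx.1), hx.2⟩
  simpa using Finset.sum_le_card_nsmul Finset.univ _ _ fun σ _ => h σ

end MaximalOperator

section WeakTypeEquivalence

variable {d : ℕ} {p : Seminorm ℝ (Fin d → ℝ)} {μ : Measure (Fin d → ℝ)}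
  [SMulInvariantMeasure (Fin d → ℤˣ) (Fin d → ℝ) μ]

theorem IsSolidSeminorm.weakTypeOneOne_plusBalls (hp : IsSolidSeminorm p)
    (hμ : ∀ᵐ x ∂μ, ∀ i, x i ≠ 0) (h : WeakTypeOneOne μ (maximalOp d μ (fullBalls d p))) :
    WeakTypeOneOne (μ.restrict (posOrthant d))
      (maximalOp d (μ.restrict (posOrthant d)) (plusBalls d p)) := by
  have hP := measurableSet_posOrthant d
  refine h.transfer (posOrthant d).indicator one_pos (pow_pos two_pos d)
    (fun f hf => (integrable_indicator_iff hP).2 hf) (fun f _ => ?_) fun f _ t _ => ?_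
  · simpa using (setLIntegral_abs_indicator (t := Set.univ) hP f).le
  · rw [ENNReal.ofReal_one, one_mul]
    refine (Measure.restrict_apply_le _ _).trans (measure_mono fun x hx => ?_)
    rw [Set.mem_ofPred_eq, ENNReal.ofReal_div_of_pos (pow_pos two_pos d)]
    refine ENNReal.div_lt_of_lt_mul' (hx.trans_le ?_)
    simpa using hp.maximalOp_plusBalls_le hμ f x

theorem IsSolidSeminorm.weakTypeOneOne_fullBalls (hp : IsSolidSeminorm p)
    (hμ : ∀ᵐ x ∂μ, ∀ i, x i ≠ 0)
    (h : WeakTypeOneOne (μ.restrict (posOrthant d))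
      (maximalOp d (μ.restrict (posOrthant d)) (plusBalls d p))) :
    WeakTypeOneOne μ (maximalOp d μ (fullBalls d p)) := by
  refine h.transfer signSum (pow_pos two_pos d) one_pos
    (fun f hf => (integrable_signSum hf).restrict)
    (fun f hf => (setLIntegral_posOrthant_signSum hμ hf.aemeasurable).le) fun f hf t _ => ?_
  rw [div_one]
  rw [ENNReal.ofReal_pow zero_le_two, ENNReal.ofReal_ofNat]
  exact measure_le_of_sign_smul_mem hμ fun σ x hx hσx =>
    lt_of_lt_of_le hσx (hp.maximalOp_fullBalls_sign_smul_le hμ hf.aemeasurable σ hx)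

theorem maximal_weak_type_iff_restricted_general (hp : IsSolidSeminorm p)
    (hμ : ∀ᵐ x ∂μ, ∀ i, x i ≠ 0) :
    WeakTypeOneOne μ (maximalOp d μ (fullBalls d p)) ↔
      WeakTypeOneOne (μ.restrict (posOrthant d))
        (maximalOp d (μ.restrict (posOrthant d)) (plusBalls d p)) :=
  ⟨hp.weakTypeOneOne_plusBalls hμ, hp.weakTypeOneOne_fullBalls hμ⟩

end WeakTypeEquivalence

section ExponentialMeasure

theorem smulInvariantMeasure_withDensity {G α : Type*} [Group G] [MulAction G α]
    [MeasurableSpace α] [MeasurableConstSMul G α] {μ : Measure α} [SMulInvariantMeasure G α μ]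
    {g : α → ℝ≥0∞} (hg : ∀ (c : G) (x : α), g (c • x) = g x) :
    SMulInvariantMeasure G α (μ.withDensity g) where
  measure_preimage_smul c s hs := by
    rw [withDensity_apply _ hs, withDensity_apply _ (measurable_const_smul c hs),
      ← (measurePreserving_smul c μ).setLIntegral_comp_preimage_emb
        (measurableEmbedding_const_smul c) g s]
    simp only [hg]

instance smulInvariantMeasure_sign_volume {ι : Type*} [Fintype ι] :
    SMulInvariantMeasure (ι → ℤˣ) (ι → ℝ) volume where
  measure_preimage_smul σ s hs := by
    have h (i : ι) : MeasurePreserving (fun t : ℝ => σ i • t) := by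
      rcases Int.units_eq_one_or (σ i) with h | h
      · simp only [h, one_smul]
        exact MeasurePreserving.id volume
      · simpa [h, Units.smul_def] using Measure.measurePreserving_neg (volume : Measure ℝ)
    exact (volume_preserving_pi h).measure_preimage hs.nullMeasurableSet

instance smulInvariantMeasure_sign_expMeasure (d : ℕ) :
    SMulInvariantMeasure (Fin d → ℤˣ) (Fin d → ℝ) (expMeasure d) :=
  smulInvariantMeasure_withDensity fun σ x => by
    have h (i : Fin d) : |(σ • x) i| = |x i| := congr_fun (abs_sign_smul σ x) i
    simp only [h]

theorem ae_expMeasure_ne_zero (d : ℕ) : ∀ᵐ x ∂expMeasure d, ∀ i, x i ≠ 0 := by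
  have h : ∀ᵐ x : Fin d → ℝ, ∀ i, x i ≠ 0 :=
    ae_all_iff.2 fun i => Measure.ae_eval_ne (fun _ => volume) i 0
  exact (withDensity_absolutelyContinuous _ _).ae_le h

end ExponentialMeasure

/-- For `d ≥ 1` and `q ∈ {1,2,∞}`, the non-centered maximal operator over open ℓ^q balls of
`ℝ^d` is of weak type (1,1) w.r.t. `(ℝ^d, dμ)` iff the restricted non-centered maximal
operator over the ℓ^q metric balls of `ℝ^d_+` is of weak type (1,1) w.r.t. `(ℝ^d_+, dμ)`. -/
theorem maximal_weak_type_iff_restricted (d : ℕ) (hd : 1 ≤ d)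
    (N : (Fin d → ℝ) → ℝ)
    (hN : N = l1norm d ∨ N = l2norm d ∨ N = linfnorm d) :
    (∃ C : ℝ, 0 < C ∧
      ∀ f : (Fin d → ℝ) → ℝ, Integrable f (expMeasure d) →
        ∀ lam : ℝ, 0 < lam →
          expMeasure d {x | ENNReal.ofReal lam
              < maximalOp d (expMeasure d) (fullBalls d N) f x}
            ≤ ENNReal.ofReal (C / lam) * ∫⁻ x, ENNReal.ofReal |f x| ∂(expMeasure d))
    ↔
    (∃ C : ℝ, 0 < C ∧
      ∀ f : (Fin d → ℝ) → ℝ, Integrable f ((expMeasure d).restrict (posOrthant d)) →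
        ∀ lam : ℝ, 0 < lam →
          (expMeasure d).restrict (posOrthant d) {x | ENNReal.ofReal lam
              < maximalOp d ((expMeasure d).restrict (posOrthant d)) (plusBalls d N) f x}
            ≤ ENNReal.ofReal (C / lam)
              * ∫⁻ x, ENNReal.ofReal |f x| ∂((expMeasure d).restrict (posOrthant d))) := by
  obtain ⟨p, hp, rfl⟩ : ∃ p : Seminorm ℝ (Fin d → ℝ), IsSolidSeminorm p ∧ ⇑p = N := by
    rcases hN with rfl | rfl | rfl
    · exact ⟨_, isSolidSeminorm_lpSeminorm 1, coe_lpSeminorm_one d⟩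
    · exact ⟨_, isSolidSeminorm_lpSeminorm 2, coe_lpSeminorm_two d⟩
    · exact ⟨_, isSolidSeminorm_lpSeminorm ∞, coe_lpSeminorm_top d⟩
  exact maximal_weak_type_iff_restricted_general hp (ae_expMeasure_ne_zero d)
end

section
/- Let d ≥ 1 and q ∈ {1, 2, ∞}. For every R > 0 there exists a constant C_R > 0 such that μ(E_q(x, 2r)) ≤ C_R · μ(E_q(x, r)) for all x ∈ ℝ^d_+ and all 0 < r ≤ R, where E_q(x,r) = {y ∈ ℝ^d_+ : |x − y|_q < r}. In other words, the measure μ is locally doubling on the metric measure space (ℝ^d_+, ℓ^q metric, μ). -/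
open MeasureTheory ENNReal

/-- The metric ball `E_q(x,r) = {y ∈ ℝ^d_+ : |x - y|_q < r}` of the subspace `ℝ^d_+`. -/
def ballPlus (d : ℕ) (N : (Fin d → ℝ) → ℝ) (x : Fin d → ℝ) (r : ℝ) : Set (Fin d → ℝ) :=
  {y | (∀ i, 0 < y i) ∧ N (x - y) < r}

/-!
The three norms are comparable with constants depending only on `d`, and an orthant ball
contains a cube with corner at its centre and of side proportional to its radius, so Lebesgue
measure is doubling on the orthant at all scales. The density is `exp (-φ)` with `φ` Lipschitz,
hence on a ball of radius at most `R` it is constant up to a factor depending only on `R`, and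
doubling survives at those scales.
-/

section Norms

variable {d : ℕ} (z : Fin d → ℝ)

theorem norm_le_l2norm : ‖z‖ ≤ l2norm d z :=
  (pi_norm_le_iff_of_nonneg (Real.sqrt_nonneg _)).2 fun i =>
    Real.abs_le_sqrt <|
      Finset.single_le_sum (f := fun j => z j ^ 2) (fun j _ => sq_nonneg (z j)) (Finset.mem_univ i)

theorem l2norm_le_l1norm : l2norm d z ≤ l1norm d z := by
  refine Real.sqrt_le_iff.2 ⟨Finset.sum_nonneg fun i _ => abs_nonneg (z i), ?_⟩
  simpa only [sq_abs, l1norm] using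
    Finset.sum_sq_le_sq_sum_of_nonneg (s := Finset.univ) fun i _ => abs_nonneg (z i)

theorem l1norm_le_mul_norm : l1norm d z ≤ d * ‖z‖ := by
  simpa only [l1norm, Real.norm_eq_abs, Fintype.card_fin, nsmul_eq_mul] using
    Pi.sum_norm_apply_le_norm z

theorem lipschitzWith_l1norm (d : ℕ) : LipschitzWith d (l1norm d) := by
  refine LipschitzWith.of_le_add_mul _ fun x y => ?_
  calc l1norm d x ≤ ∑ i, (|y i| + |(x - y) i|) :=
        Finset.sum_le_sum fun i _ => by
          simpa only [Pi.sub_apply, add_sub_cancel] using abs_add_le (y i) (x i - y i)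
    _ = l1norm d y + l1norm d (x - y) := Finset.sum_add_distrib
    _ ≤ l1norm d y + d * dist x y := by
        rw [dist_eq_norm]
        gcongr
        exact l1norm_le_mul_norm _

theorem norm_le_and_le_mul_norm {N : (Fin d → ℝ) → ℝ}
    (hN : N = l1norm d ∨ N = l2norm d ∨ N = linfnorm d) : ‖z‖ ≤ N z ∧ N z ≤ d * ‖z‖ := by
  have h₂ := norm_le_l2norm z
  have h₂₁ := l2norm_le_l1norm z
  have h₁ := l1norm_le_mul_norm z
  rcases hN with rfl | rfl | rfl
  · exact ⟨h₂.trans h₂₁, h₁⟩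
  · exact ⟨h₂, h₂₁.trans h₁⟩
  · exact ⟨le_rfl, (h₂.trans h₂₁).trans h₁⟩

end Norms

section LipschitzPotential

open Metric
open scoped NNReal

variable {X : Type*} [PseudoMetricSpace X] [MeasurableSpace X] (μ : Measure X)
  {φ : X → ℝ} {L : ℝ≥0} {x : X} {ρ σ : ℝ} {s t : Set X}

theorem withDensity_exp_neg_le [SFinite μ] (hφ : LipschitzWith L φ) (hs : s ⊆ closedBall x ρ) :
    μ.withDensity (fun y => ENNReal.ofReal (Real.exp (-φ y))) s
      ≤ ENNReal.ofReal (Real.exp (L * ρ - φ x)) * μ s := by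
  rw [withDensity_apply', ← setLIntegral_const]
  refine setLIntegral_mono measurable_const fun y hy => ?_
  have hxy : dist x y ≤ ρ := mem_closedBall'.1 (hs hy)
  have hφxy : φ x ≤ φ y + L * ρ := (hφ.le_add_mul x y).trans (by gcongr)
  gcongr
  linarith

theorem le_withDensity_exp_neg [OpensMeasurableSpace X] (hφ : LipschitzWith L φ)
    (hs : s ⊆ closedBall x ρ) :
    ENNReal.ofReal (Real.exp (-(L * ρ) - φ x)) * μ s
      ≤ μ.withDensity (fun y => ENNReal.ofReal (Real.exp (-φ y))) s := by
  have hmeas : Measurable fun y => ENNReal.ofReal (Real.exp (-φ y)) :=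
    hφ.continuous.measurable.neg.exp.ennreal_ofReal
  rw [← setLIntegral_const]
  refine (setLIntegral_mono hmeas fun y hy => ?_).trans (withDensity_apply_le _ s)
  have hyx : dist y x ≤ ρ := hs hy
  have hφyx : φ y ≤ φ x + L * ρ := (hφ.le_add_mul y x).trans (by gcongr)
  gcongr
  linarith

theorem withDensity_exp_neg_le_mul [SFinite μ] [OpensMeasurableSpace X] {c : ℝ≥0∞}
    (hφ : LipschitzWith L φ) (hs : s ⊆ closedBall x ρ) (ht : t ⊆ closedBall x σ)
    (hst : μ s ≤ c * μ t) :
    μ.withDensity (fun y => ENNReal.ofReal (Real.exp (-φ y))) s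
      ≤ c * ENNReal.ofReal (Real.exp (L * (ρ + σ)))
        * μ.withDensity (fun y => ENNReal.ofReal (Real.exp (-φ y))) t := by
  have hexp : ENNReal.ofReal (Real.exp (L * ρ - φ x)) =
      ENNReal.ofReal (Real.exp (L * (ρ + σ))) * ENNReal.ofReal (Real.exp (-(L * σ) - φ x)) := by
    rw [← ENNReal.ofReal_mul (Real.exp_nonneg _), ← Real.exp_add]
    ring_nf
  calc _ ≤ ENNReal.ofReal (Real.exp (L * ρ - φ x)) * μ s := withDensity_exp_neg_le μ hφ hs
    _ ≤ ENNReal.ofReal (Real.exp (L * ρ - φ x)) * (c * μ t) := by gcongr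
    _ = c * ENNReal.ofReal (Real.exp (L * (ρ + σ)))
        * (ENNReal.ofReal (Real.exp (-(L * σ) - φ x)) * μ t) := by rw [hexp]; ring
    _ ≤ _ := by
        gcongr
        exact le_withDensity_exp_neg μ hφ ht

end LipschitzPotential

section Ball

open Metric
open scoped NNReal

variable {d : ℕ} {N : (Fin d → ℝ) → ℝ} {A B : ℝ} {x : Fin d → ℝ} {r s : ℝ}

theorem ballPlus_subset_closedBall (hA : 0 ≤ A) (hNA : ∀ z, ‖z‖ ≤ A * N z) :
    ballPlus d N x r ⊆ closedBall x (A * r) := by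
  rintro y ⟨-, hy⟩
  rw [mem_closedBall', dist_eq_norm]
  exact (hNA _).trans (by gcongr)

theorem pi_Ioo_subset_ballPlus (hB : 0 < B) (hNB : ∀ z, N z ≤ B * ‖z‖) (hx : 0 ≤ x)
    (hr : 0 < r) :
    (Set.univ.pi fun i => Set.Ioo (x i) (x i + r / B)) ⊆ ballPlus d N x r := by
  intro y hy
  have hxy : ‖x - y‖ < r / B := (pi_norm_lt_iff (by positivity)).2 fun i => by
    obtain ⟨hlo, hhi⟩ := hy i trivial
    rw [Pi.sub_apply, Real.norm_eq_abs, abs_lt]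
    constructor <;> linarith
  exact ⟨fun i => (hx i).trans_lt (hy i trivial).1,
    (hNB _).trans_lt ((lt_div_iff₀' hB).1 hxy)⟩

theorem volume_ballPlus_le (hA : 0 ≤ A) (hNA : ∀ z, ‖z‖ ≤ A * N z) (hr : 0 ≤ r) :
    volume (ballPlus d N x r) ≤ ENNReal.ofReal ((2 * (A * r)) ^ d) := by
  simpa only [Real.volume_pi_closedBall x (mul_nonneg hA hr), Fintype.card_fin] using
    measure_mono (μ := volume) (ballPlus_subset_closedBall (x := x) (r := r) hA hNA)

theorem le_volume_ballPlus (hB : 0 < B) (hNB : ∀ z, N z ≤ B * ‖z‖) (hx : 0 ≤ x) (hr : 0 < r) :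
    ENNReal.ofReal ((r / B) ^ d) ≤ volume (ballPlus d N x r) := by
  refine le_trans (le_of_eq ?_) (measure_mono (pi_Ioo_subset_ballPlus hB hNB hx hr))
  simp only [Real.volume_pi_Ioo, add_sub_cancel_left, Finset.prod_const, Finset.card_univ,
    Fintype.card_fin]
  exact ENNReal.ofReal_pow (by positivity) d

theorem volume_ballPlus_le_mul (hA : 0 ≤ A) (hB : 0 < B) (hNA : ∀ z, ‖z‖ ≤ A * N z)
    (hNB : ∀ z, N z ≤ B * ‖z‖) (hx : 0 ≤ x) (hs : 0 ≤ s) (hr : 0 < r) :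
    volume (ballPlus d N x s)
      ≤ ENNReal.ofReal ((2 * A * B * (s / r)) ^ d) * volume (ballPlus d N x r) :=
  calc volume (ballPlus d N x s) ≤ ENNReal.ofReal ((2 * (A * s)) ^ d) :=
        volume_ballPlus_le hA hNA hs
    _ = ENNReal.ofReal ((2 * A * B * (s / r)) ^ d) * ENNReal.ofReal ((r / B) ^ d) := by
        rw [← ENNReal.ofReal_mul (by positivity), ← mul_pow]
        congr 2
        field_simp
    _ ≤ _ := by
        gcongr
        exact le_volume_ballPlus hB hNB hx hr

theorem expMeasure_locally_doubling_general {φ : (Fin d → ℝ) → ℝ} {L : ℝ≥0}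
    (hφ : LipschitzWith L φ) (hA : 0 < A) (hB : 0 < B) (hNA : ∀ z, ‖z‖ ≤ A * N z)
    (hNB : ∀ z, N z ≤ B * ‖z‖) (R : ℝ) :
    ∃ C : ℝ, 0 < C ∧ ∀ x : Fin d → ℝ, 0 ≤ x → ∀ r : ℝ, 0 < r → r ≤ R →
      volume.withDensity (fun y => ENNReal.ofReal (Real.exp (-φ y))) (ballPlus d N x (2 * r))
        ≤ ENNReal.ofReal C *
          volume.withDensity (fun y => ENNReal.ofReal (Real.exp (-φ y))) (ballPlus d N x r) := by
  refine ⟨(2 * A * B * 2) ^ d * Real.exp (L * (A * (2 * R) + A * R)), by positivity,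
    fun x hx r hr hrR => ?_⟩
  have hvol := volume_ballPlus_le_mul (s := 2 * r) hA.le hB hNA hNB hx (by positivity) hr
  rw [mul_div_cancel_right₀ _ hr.ne'] at hvol
  rw [ENNReal.ofReal_mul (by positivity)]
  refine (withDensity_exp_neg_le_mul volume hφ (ballPlus_subset_closedBall hA.le hNA)
    (ballPlus_subset_closedBall hA.le hNA) hvol).trans ?_
  gcongr

end Ball

/-- For `d ≥ 1` and `q ∈ {1,2,∞}`, the measure `μ` is locally doubling on
`(ℝ^d_+, ℓ^q metric, μ)`: for every `R > 0` there is `C_R > 0` with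
`μ(E_q(x,2r)) ≤ C_R μ(E_q(x,r))` for all `x ∈ ℝ^d_+` and `0 < r ≤ R`. -/
theorem expMeasure_locally_doubling (d : ℕ) (hd : 1 ≤ d)
    (N : (Fin d → ℝ) → ℝ)
    (hN : N = l1norm d ∨ N = l2norm d ∨ N = linfnorm d) :
    ∀ R : ℝ, 0 < R → ∃ C : ℝ, 0 < C ∧
      ∀ x : Fin d → ℝ, (∀ i, 0 < x i) → ∀ r : ℝ, 0 < r → r ≤ R →
        expMeasure d (ballPlus d N x (2 * r))
          ≤ ENNReal.ofReal C * expMeasure d (ballPlus d N x r) := by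
  intro R _
  obtain ⟨C, hC, hdoubling⟩ := expMeasure_locally_doubling_general (lipschitzWith_l1norm d)
    one_pos (Nat.cast_pos.2 hd)
    (fun z => (norm_le_and_le_mul_norm z hN).1.trans_eq (one_mul _).symm)
    (fun z => (norm_le_and_le_mul_norm z hN).2) R
  exact ⟨C, hC, fun x hx => hdoubling x fun i => (hx i).le⟩
end

section
/- Let d ≥ 1. There exist constants c, C > 0 depending only on d such that for all x ∈ ℝ^d_+ and all r with 1 ≤ r ≤ min_{1 ≤ i ≤ d} xᵢ, the Euclidean ball B(x,r) = {y ∈ ℝ^d_+ : |x − y|₂ < r} is contained in ℝ^d_+ and c · exp(−(|x|₁ − √d · r)) · r^{(d−1)/2} ≤ μ(B(x,r)) ≤ C · exp(−(|x|₁ − √d · r)) · r^{(d−1)/2}, where |x|₁ = x₁ + ⋯ + x_d. -/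
/-!
Restricted to the positive orthant, the density of the measure is `exp (-⟪v, y⟫)` with
`v = (1, …, 1)`, and `‖v‖ = √d`. Slice the ball `B(x, r)` by the hyperplanes orthogonal to `v`,
at distance `s` from the point `x - (r / ‖v‖) • v` of the ball where the density is maximal.
The density is constant on each slice, equal to `exp (-(⟪v, x⟫ - ‖v‖ r)) * exp (-‖v‖ s)`, and by
Pythagoras the slice is a `(d - 1)`-dimensional ball of squared radius `2 r s - s ^ 2`. Since
`exp (-‖v‖ s)` confines the mass to bounded `s`, where `2 r s - s ^ 2` is comparable to `r`, the
slices that matter have volume comparable to `r ^ ((d - 1) / 2)`.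
-/

open MeasureTheory ENNReal

section BallProfile

open Metric Module Real

variable {F : Type*} [NormedAddCommGroup F] [NormedSpace ℝ F] [FiniteDimensional ℝ F]
  [MeasurableSpace F] [BorelSpace F] (μ : Measure F) [μ.IsAddHaarMeasure]

lemma addHaar_ball_sqrt (x : F) {t : ℝ} (ht : 0 < t) :
    μ (ball x √t) = ENNReal.ofReal (t ^ ((finrank ℝ F : ℝ) / 2) * μ.real (ball 0 1)) := by
  rw [Measure.addHaar_ball_of_pos μ x (sqrt_pos.2 ht), rpow_div_two_eq_sqrt _ ht.le,
    Real.rpow_natCast, ENNReal.ofReal_mul (by positivity), ofReal_measureReal]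

lemma lintegral_rpow_mul_exp_neg_mul_Ioi {a κ : ℝ} (ha : 0 < a) (hκ : 0 < κ) :
    ∫⁻ s in Set.Ioi 0, ENNReal.ofReal (s ^ (a - 1) * exp (-(κ * s))) =
      ENNReal.ofReal ((1 / κ) ^ a * Gamma a) := by
  rw [← integral_rpow_mul_exp_neg_mul_Ioi ha hκ, ofReal_integral_eq_lintegral_ofReal]
  · simpa only [IntegrableOn, Real.rpow_one, neg_mul] using
      integrableOn_rpow_mul_exp_neg_mul_rpow (by linarith : -1 < a - 1) one_pos hκ
  · filter_upwards [ae_restrict_mem measurableSet_Ioi] with s hs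
    have : 0 < s := hs
    positivity

lemma lintegral_exp_neg_mul_addHaar_ball_sqrt_le {κ r : ℝ} (hκ : 0 < κ) (hr : 0 < r) :
    ∫⁻ s, ENNReal.ofReal (exp (-(κ * s))) * μ (ball 0 √(2 * r * s - s ^ 2)) ≤
      ENNReal.ofReal (2 ^ ((finrank ℝ F : ℝ) / 2) * μ.real (ball 0 1) *
        ((1 / κ) ^ ((finrank ℝ F : ℝ) / 2 + 1) * Gamma ((finrank ℝ F : ℝ) / 2 + 1)) *
        r ^ ((finrank ℝ F : ℝ) / 2)) := by
  set p : ℝ := (finrank ℝ F : ℝ) / 2 with hp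
  have : 0 ≤ p := by positivity
  set A : ℝ := (2 * r) ^ p * μ.real (ball 0 1) with hA
  have integrand_le (s : ℝ) :
      ENNReal.ofReal (exp (-(κ * s))) * μ (ball 0 √(2 * r * s - s ^ 2)) ≤
        (Set.Ioi 0).indicator
          (fun s ↦ ENNReal.ofReal A * ENNReal.ofReal (s ^ (p + 1 - 1) * exp (-(κ * s)))) s := by
    rcases le_or_gt s 0 with hs | hs
    · have : 2 * r * s - s ^ 2 ≤ 0 := by nlinarith
      simp [sqrt_eq_zero_of_nonpos this]
    · have hball : ball (0 : F) √(2 * r * s - s ^ 2) ⊆ ball 0 √(2 * r * s) := by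
        gcongr
        linarith [sq_nonneg s]
      rw [Set.indicator_of_mem (Set.mem_Ioi.2 hs), ← ENNReal.ofReal_mul (by positivity)]
      grw [hball]
      rw [addHaar_ball_sqrt μ 0 (by positivity), ← ENNReal.ofReal_mul (by positivity), ← hp,
        mul_rpow (by positivity) hs.le, add_sub_cancel_right, hA]
      apply le_of_eq
      ring_nf
  calc
    _ ≤ ∫⁻ s, (Set.Ioi 0).indicator
          (fun s ↦ ENNReal.ofReal A * ENNReal.ofReal (s ^ (p + 1 - 1) * exp (-(κ * s)))) s :=
      lintegral_mono integrand_le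
    _ = ENNReal.ofReal A * ENNReal.ofReal ((1 / κ) ^ (p + 1) * Gamma (p + 1)) := by
      rw [lintegral_indicator measurableSet_Ioi, lintegral_const_mul _ (by fun_prop),
        lintegral_rpow_mul_exp_neg_mul_Ioi (by positivity) hκ]
    _ = _ := by
      rw [← ENNReal.ofReal_mul (by positivity), hA, mul_rpow two_pos.le hr.le]
      ring_nf

lemma le_lintegral_exp_neg_mul_addHaar_ball_sqrt {κ r : ℝ} (hκ : 0 ≤ κ) (hr : 1 ≤ r) :
    ENNReal.ofReal (exp (-κ) * (1 / 2) ^ ((finrank ℝ F : ℝ) / 2 + 1) * μ.real (ball 0 1) *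
        r ^ ((finrank ℝ F : ℝ) / 2)) ≤
      ∫⁻ s, ENNReal.ofReal (exp (-(κ * s))) * μ (ball 0 √(2 * r * s - s ^ 2)) := by
  set p : ℝ := (finrank ℝ F : ℝ) / 2 with hp
  -- For `1 / 2 ≤ s ≤ 1` the squared radius `2 * r * s - s ^ 2` is at least `r / 2`.
  calc
    _ = ENNReal.ofReal (exp (-κ)) * μ (ball 0 √(1 / 2 * r)) *
          volume (Set.Icc (1 / 2 : ℝ) 1) := by
      rw [addHaar_ball_sqrt μ 0 (by positivity), ← hp, Real.volume_Icc,
        ← ENNReal.ofReal_mul (by positivity), ← ENNReal.ofReal_mul (by positivity),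
        mul_rpow (by norm_num) (by positivity), rpow_add_one (by norm_num)]
      congr 1
      ring
    _ = ∫⁻ _ in Set.Icc (1 / 2 : ℝ) 1,
          ENNReal.ofReal (exp (-κ)) * μ (ball 0 √(1 / 2 * r)) := by
      rw [setLIntegral_const]
    _ ≤ ∫⁻ s in Set.Icc (1 / 2 : ℝ) 1,
          ENNReal.ofReal (exp (-(κ * s))) * μ (ball 0 √(2 * r * s - s ^ 2)) := by
      refine setLIntegral_mono' measurableSet_Icc fun s ⟨hs, hs'⟩ ↦ ?_
      gcongr
      · exact mul_le_of_le_one_right hκ hs'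
      · nlinarith
    _ ≤ _ := setLIntegral_le_lintegral _ _

end BallProfile

section Slicing

open Metric Module Real Submodule
open scoped InnerProductSpace

variable {E : Type*} [NormedAddCommGroup E] [InnerProductSpace ℝ E]

-- For `s` outside `(0, 2 * r)` the square root takes its junk value `0` and both balls are missed.
lemma add_mem_ball_iff_mem_ball_sqrt {e : E} (he : ‖e‖ = 1) (x : E) {r : ℝ} (hr : 0 ≤ r) (s : ℝ)
    (w : (ℝ ∙ e)ᗮ) :
    x - r • e + (s • e + w) ∈ ball x r ↔ w ∈ ball 0 √(2 * r * s - s ^ 2) := by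
  have horth : ⟪(s - r) • e, (w : E)⟫_ℝ = 0 := by
    rw [real_inner_smul_left, mem_orthogonal_singleton_iff_inner_right.1 w.2, mul_zero]
  have hpyth : ‖x - r • e + (s • e + w) - x‖ ^ 2 = (s - r) ^ 2 + ‖w‖ ^ 2 := by
    rw [show x - r • e + (s • e + w) - x = (s - r) • e + w by module, norm_add_sq_real, horth,
      norm_smul, he, norm_eq_abs, mul_one, sq_abs, mul_zero, add_zero, coe_norm]
  rw [mem_ball_iff_norm, mem_ball_zero_iff, lt_sqrt (norm_nonneg _),
    ← sq_lt_sq₀ (norm_nonneg _) hr, hpyth]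
  constructor <;> intro h <;> linarith

variable [FiniteDimensional ℝ E] [MeasurableSpace E] [BorelSpace E]

lemma lintegral_eq_lintegral_submodule_orthogonal (K : Submodule ℝ E) {f : E → ℝ≥0∞}
    (hf : Measurable f) :
    ∫⁻ y, f y = ∫⁻ u : K, ∫⁻ w : Kᗮ, f (u + w) := by
  have hdecomp : MeasurePreserving fun z : K × Kᗮ ↦ (z.1 + z.2 : E) :=
    K.orthogonalDecomposition.symm.measurePreserving.comp (WithLp.volume_preserving_toLp K Kᗮ)
  rw [← hdecomp.lintegral_comp hf, Measure.volume_eq_prod,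
    lintegral_prod (fun z : K × Kᗮ ↦ f (z.1 + z.2)) (hf.comp hdecomp.measurable).aemeasurable]

lemma lintegral_eq_lintegral_line_orthogonal {e : E} (he : ‖e‖ = 1) {f : E → ℝ≥0∞}
    (hf : Measurable f) :
    ∫⁻ y, f y = ∫⁻ s : ℝ, ∫⁻ w : (ℝ ∙ e)ᗮ, f (s • e + w) := by
  rw [lintegral_eq_lintegral_submodule_orthogonal (ℝ ∙ e) hf,
    ← (LinearIsometryEquiv.toSpanUnitSingleton e he).measurePreserving.lintegral_comp
      (Measurable.lintegral_prod_right' (f := fun z : (ℝ ∙ e) × (ℝ ∙ e)ᗮ ↦ f (z.1 + z.2))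
        (hf.comp (by fun_prop)))]
  rfl

lemma setLIntegral_ball_exp_neg_mul_inner {e : E} (he : ‖e‖ = 1) (κ : ℝ) (x : E) {r : ℝ}
    (hr : 0 ≤ r) :
    ∫⁻ y in ball x r, ENNReal.ofReal (exp (-(κ * ⟪e, y⟫_ℝ))) =
      ENNReal.ofReal (exp (-(κ * ⟪e, x⟫_ℝ - κ * r))) *
        ∫⁻ s, ENNReal.ofReal (exp (-(κ * s))) *
          volume (ball (0 : (ℝ ∙ e)ᗮ) √(2 * r * s - s ^ 2)) := by
  have inner_slice (s : ℝ) (w : (ℝ ∙ e)ᗮ) :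
      ⟪e, x - r • e + (s • e + w)⟫_ℝ = ⟪e, x⟫_ℝ - r + s := by
    rw [inner_add_right, inner_add_right, inner_sub_right, real_inner_smul_right,
      real_inner_smul_right, real_inner_self_eq_norm_sq, he,
      mem_orthogonal_singleton_iff_inner_right.1 w.2]
    ring
  set f : E → ℝ≥0∞ := (ball x r).indicator fun y ↦ ENNReal.ofReal (exp (-(κ * ⟪e, y⟫_ℝ))) with hf
  have hf_meas : Measurable f := Measurable.indicator (by fun_prop) measurableSet_ball
  have hf_shift : Measurable fun y ↦ f (x - r • e + y) := hf_meas.comp (measurable_const_add _)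
  rw [← lintegral_indicator measurableSet_ball, ← hf, ← lintegral_add_left_eq_self f (x - r • e),
    lintegral_eq_lintegral_line_orthogonal he hf_shift,
    ← lintegral_const_mul' _ _ ENNReal.ofReal_ne_top]
  refine lintegral_congr fun s ↦ ?_
  calc
    _ = ∫⁻ w : (ℝ ∙ e)ᗮ, (ball 0 √(2 * r * s - s ^ 2)).indicator
          (fun _ ↦ ENNReal.ofReal (exp (-(κ * (⟪e, x⟫_ℝ - r + s))))) w := by
      refine lintegral_congr fun w ↦ ?_
      classical
      rw [hf, Set.indicator_apply, Set.indicator_apply, inner_slice]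
      exact if_congr (add_mem_ball_iff_mem_ball_sqrt he x hr s w) rfl rfl
    _ = _ := by
      rw [lintegral_indicator_const measurableSet_ball, ← mul_assoc,
        ← ENNReal.ofReal_mul (exp_nonneg _), ← exp_add]
      ring_nf

theorem exists_bounds_setLIntegral_ball_exp_neg_inner {v : E} (hv : v ≠ 0) :
    ∃ c C : ℝ, 0 < c ∧ 0 < C ∧ ∀ (x : E) (r : ℝ), 1 ≤ r →
      ENNReal.ofReal
          (c * exp (-(⟪v, x⟫_ℝ - ‖v‖ * r)) * r ^ (((finrank ℝ E : ℝ) - 1) / 2)) ≤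
        ∫⁻ y in ball x r, ENNReal.ofReal (exp (-⟪v, y⟫_ℝ)) ∧
      ∫⁻ y in ball x r, ENNReal.ofReal (exp (-⟪v, y⟫_ℝ)) ≤
        ENNReal.ofReal
          (C * exp (-(⟪v, x⟫_ℝ - ‖v‖ * r)) * r ^ (((finrank ℝ E : ℝ) - 1) / 2)) := by
  set e : E := ‖v‖⁻¹ • v with he_def
  have hκ : 0 < ‖v‖ := norm_pos_iff.2 hv
  have he : ‖e‖ = 1 := norm_smul_inv_norm hv
  have inner_v (y : E) : ⟪v, y⟫_ℝ = ‖v‖ * ⟪e, y⟫_ℝ := by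
    rw [he_def, real_inner_smul_left, mul_inv_cancel_left₀ hκ.ne']
  have hdim : (finrank ℝ E : ℝ) - 1 = finrank ℝ (ℝ ∙ e)ᗮ := by
    rw [← (ℝ ∙ e).finrank_add_finrank_orthogonal,
      finrank_span_singleton (norm_ne_zero_iff.1 (he ▸ one_ne_zero))]
    push_cast
    ring
  set p : ℝ := (finrank ℝ (ℝ ∙ e)ᗮ : ℝ) / 2 with hp
  set ω : ℝ := volume.real (ball (0 : (ℝ ∙ e)ᗮ) 1)
  have hω : 0 < ω :=
    ENNReal.toReal_pos (measure_ball_pos _ _ one_pos).ne' measure_ball_lt_top.ne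
  refine ⟨exp (-‖v‖) * (1 / 2) ^ (p + 1) * ω,
    2 ^ p * ω * ((1 / ‖v‖) ^ (p + 1) * Gamma (p + 1)), by positivity, by positivity,
    fun x r hr ↦ ?_⟩
  have ofReal_factor (k : ℝ) :
      ENNReal.ofReal (k * exp (-(‖v‖ * ⟪e, x⟫_ℝ - ‖v‖ * r)) * r ^ p) =
        ENNReal.ofReal (exp (-(‖v‖ * ⟪e, x⟫_ℝ - ‖v‖ * r))) * ENNReal.ofReal (k * r ^ p) := by
    rw [← ENNReal.ofReal_mul (exp_nonneg _)]
    ring_nf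
  simp only [inner_v, hdim, ← hp, ofReal_factor,
    setLIntegral_ball_exp_neg_mul_inner he _ x (zero_le_one.trans hr)]
  constructor
  · gcongr
    exact le_lintegral_exp_neg_mul_addHaar_ball_sqrt volume hκ.le hr
  · gcongr
    exact lintegral_exp_neg_mul_addHaar_ball_sqrt_le volume hκ (by linarith)

end Slicing

section PositiveOrthant

open Metric
open scoped InnerProductSpace

variable {ι : Type*} [Fintype ι]

lemma setOf_sqrt_sum_sub_sq_lt_eq_preimage_ball (x : ι → ℝ) (r : ℝ) :
    {y : ι → ℝ | √(∑ i, (x i - y i) ^ 2) < r} = WithLp.toLp 2 ⁻¹' ball (WithLp.toLp 2 x) r := by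
  ext y
  simp [EuclideanSpace.dist_eq, Real.dist_eq, sq_abs, dist_comm (WithLp.toLp 2 y)]

lemma forall_pos_of_mem_ball {x y : EuclideanSpace ℝ ι} {r : ℝ} (hx : ∀ i, r ≤ x i)
    (hy : y ∈ ball x r) (i : ι) : 0 < y i := by
  have : |x i - y i| < r := (PiLp.norm_apply_le (x - y) i).trans_lt (mem_ball_iff_norm'.1 hy)
  linarith [le_abs_self (x i - y i), hx i]

lemma inner_toLp_one (y : EuclideanSpace ℝ ι) : ⟪WithLp.toLp 2 (1 : ι → ℝ), y⟫_ℝ = ∑ i, y i := by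
  simp [PiLp.inner_apply]

lemma norm_toLp_one : ‖WithLp.toLp 2 (1 : ι → ℝ)‖ = √(Fintype.card ι) := by
  simp [EuclideanSpace.norm_eq]

lemma expMeasure_preimage_toLp {d : ℕ} {s : Set (EuclideanSpace ℝ (Fin d))}
    (hs : MeasurableSet s) (hpos : ∀ y ∈ s, ∀ i, 0 ≤ y i) :
    expMeasure d (WithLp.toLp 2 ⁻¹' s) =
      ∫⁻ y in s, ENNReal.ofReal (Real.exp (-⟪WithLp.toLp 2 (1 : Fin d → ℝ), y⟫_ℝ)) := by
  have htoLp := PiLp.volume_preserving_toLp (Fin d)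
  rw [expMeasure, withDensity_apply _ (htoLp.measurable hs),
    ← htoLp.setLIntegral_comp_preimage hs (by fun_prop)]
  refine setLIntegral_congr_fun (htoLp.measurable hs) fun y hy ↦ ?_
  simp only [inner_toLp_one, fun i ↦ abs_of_nonneg (hpos _ hy i)]

end PositiveOrthant

/-- Sharp estimate for the measure of large Euclidean balls away from the boundary of `ℝ^d_+`:
for `x ∈ ℝ^d_+` and `1 ≤ r ≤ min_i x_i`, the ball `B(x,r)` lies in `ℝ^d_+` and
`μ(B(x,r)) ≍ exp(-(|x|₁ - √d r)) r^((d-1)/2)`, with constants depending only on `d`. -/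
theorem expMeasure_euclidean_ball_estimate (d : ℕ) (hd : 1 ≤ d) :
    ∃ c C : ℝ, 0 < c ∧ 0 < C ∧
      ∀ x : Fin d → ℝ, (∀ i, 0 < x i) → ∀ r : ℝ, 1 ≤ r → (∀ i, r ≤ x i) →
        {y : Fin d → ℝ | Real.sqrt (∑ i, (x i - y i) ^ 2) < r} ⊆ {y | ∀ i, 0 < y i} ∧
        ENNReal.ofReal
            (c * Real.exp (-((∑ i, x i) - Real.sqrt d * r)) * r ^ (((d : ℝ) - 1) / 2))
          ≤ expMeasure d {y : Fin d → ℝ | Real.sqrt (∑ i, (x i - y i) ^ 2) < r} ∧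
        expMeasure d {y : Fin d → ℝ | Real.sqrt (∑ i, (x i - y i) ^ 2) < r}
          ≤ ENNReal.ofReal
              (C * Real.exp (-((∑ i, x i) - Real.sqrt d * r)) * r ^ (((d : ℝ) - 1) / 2)) := by
  have hv : WithLp.toLp 2 (1 : Fin d → ℝ) ≠ 0 := by
    rw [← norm_ne_zero_iff, norm_toLp_one, Fintype.card_fin]
    positivity
  obtain ⟨c, C, hc, hC, hbounds⟩ := exists_bounds_setLIntegral_ball_exp_neg_inner hv
  refine ⟨c, C, hc, hC, fun x _ r hr hx ↦ ?_⟩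
  have hpos := fun y ↦ forall_pos_of_mem_ball (x := WithLp.toLp 2 x) (y := y) hx
  rw [setOf_sqrt_sum_sub_sq_lt_eq_preimage_ball,
    expMeasure_preimage_toLp measurableSet_ball fun y hy i ↦ (hpos y hy i).le]
  refine ⟨fun y hy ↦ hpos _ hy, ?_⟩
  simpa only [inner_toLp_one, norm_toLp_one, Fintype.card_fin, finrank_euclideanSpace_fin]
    using hbounds (WithLp.toLp 2 x) r hr
end

section
/- Let d ≥ 1. There exist constants c, C > 0 depending only on d such that for all x ∈ ℝ^d_+ and all r with 1 ≤ r ≤ min_{1 ≤ i ≤ d} xᵢ, the diamond D(x,r) = {y ∈ ℝ^d_+ : |x − y|₁ < r} is contained in ℝ^d_+ and c · exp(−(|x|₁ − r)) · r^{d−1} ≤ μ(D(x,r)) ≤ C · exp(−(|x|₁ − r)) · r^{d−1}, where |x|₁ = x₁ + ⋯ + x_d. -/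
open MeasureTheory ENNReal

/-!
On the positive orthant the density depends on `y` only through `s = y₁ + ⋯ + y_d`, and the change
of variables `y ↦ ((y₂, …, y_d), s)` preserves Lebesgue measure, so sets that are products in these
coordinates have explicit measure. On the diamond one has `s > |x|₁ - r`, and each `yᵢ` stays within
`r` of `xᵢ`: this gives a product set of measure `(2r)^(d-1) exp(-(|x|₁ - r))` around the diamond.
Conversely, the face `{y ≤ x, s = |x|₁ - r}` of the closed diamond has size of order `r` in each
direction, and thickening a piece of it by `1/2` in the direction of `s` stays in the diamond and
captures a fixed proportion of that mass.
-/

open Set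

section TailSum

variable {G : Type*} [AddCommMonoid G] {n : ℕ}

/-- The coordinates `((y₁, …, yₙ), y₀ + ⋯ + yₙ)` of a point `(y₀, …, yₙ)`, in which the sum of the
entries is a variable of its own. -/
def tailSum (y : Fin (n + 1) → G) : (Fin n → G) × G := (Fin.tail y, ∑ i, y i)

variable [MeasureSpace G] [MeasurableAdd₂ G] [SigmaFinite (volume : Measure G)]
  [(volume : Measure G).IsAddRightInvariant]

theorem measurePreserving_tailSum :
    MeasurePreserving (tailSum : (Fin (n + 1) → G) → (Fin n → G) × G) := by
  have split : MeasurePreserving (fun y : Fin (n + 1) → G => (Fin.tail y, y 0)) :=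
    Measure.measurePreserving_swap.comp (volume_preserving_piFinSuccAbove (fun _ => G) 0)
  have shear : MeasurePreserving (fun p : (Fin n → G) × G => (p.1, p.2 + ∑ i, p.1 i)) :=
    (MeasurePreserving.id volume).skew_product (g := fun (z : Fin n → G) t => t + ∑ i, z i)
      (by fun_prop) (.of_forall fun z => map_add_right_eq_self volume _)
  convert shear.comp split using 1
  funext y
  simp [tailSum, Fin.sum_univ_succ, Fin.tail]

theorem setLIntegral_sum_tailSum_preimage {Q : Set (Fin n → G)} (hQ : MeasurableSet Q)
    {I : Set G} (hI : MeasurableSet I) {g : G → ℝ≥0∞} (hg : Measurable g) :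
    ∫⁻ y in tailSum ⁻¹' (Q ×ˢ I), g (∑ i, y i) = (∫⁻ s in I, g s) * volume Q := by
  calc ∫⁻ y in tailSum ⁻¹' (Q ×ˢ I), g (∑ i, y i)
      = ∫⁻ p in Q ×ˢ I, g p.2 :=
        measurePreserving_tailSum.setLIntegral_comp_preimage (hQ.prod hI) (hg.comp measurable_snd)
    _ = (∫⁻ s in I, g s) * volume Q := by
        rw [Measure.volume_eq_prod, setLIntegral_prod _ (by fun_prop)]
        simp only [setLIntegral_const]

end TailSum

theorem setLIntegral_ofReal_exp_neg_Ioi (a : ℝ) :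
    ∫⁻ s in Ioi a, ENNReal.ofReal (Real.exp (-s)) = ENNReal.ofReal (Real.exp (-a)) := by
  rw [← ofReal_integral_eq_lintegral_ofReal (integrableOn_exp_neg_Ioi a)
    (.of_forall fun s => (Real.exp_pos _).le), integral_exp_neg_Ioi]

theorem setLIntegral_ofReal_exp_neg_Ioc {a b : ℝ} (hab : a ≤ b) :
    ∫⁻ s in Ioc a b, ENNReal.ofReal (Real.exp (-s)) =
      ENNReal.ofReal (Real.exp (-a) - Real.exp (-b)) := by
  rw [← ofReal_integral_eq_lintegral_ofReal
    ((integrableOn_exp_neg_Ioi a).mono_set Ioc_subset_Ioi_self)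
    (.of_forall fun s => (Real.exp_pos _).le), ← intervalIntegral.integral_of_le hab]
  simp [intervalIntegral.integral_comp_neg (fun s => Real.exp s)]

theorem expMeasure_le_setLIntegral_exp_neg_sum {d : ℕ} (s : Set (Fin d → ℝ)) :
    expMeasure d s ≤ ∫⁻ y in s, ENNReal.ofReal (Real.exp (-∑ i, y i)) := by
  rw [expMeasure, withDensity_apply']
  gcongr
  exact le_abs_self _

theorem setLIntegral_exp_neg_sum_le_expMeasure {d : ℕ} {s : Set (Fin d → ℝ)}
    (hs : ∀ y ∈ s, ∀ i, 0 ≤ y i) :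
    ∫⁻ y in s, ENNReal.ofReal (Real.exp (-∑ i, y i)) ≤ expMeasure d s := by
  rw [expMeasure, withDensity_apply']
  refine setLIntegral_mono (by fun_prop) fun y hy => ?_
  simp only [abs_of_nonneg (hs y hy _), le_refl]

section Diamond

variable {ι : Type*} [Fintype ι]

/-- The open ball of radius `r` around `x` for the `ℓ¹` distance; the type `ι → ℝ` itself carries
the sup distance. -/
def diamond (x : ι → ℝ) (r : ℝ) : Set (ι → ℝ) := {y | ∑ i, |x i - y i| < r}

theorem abs_sub_lt_of_mem_diamond {x y : ι → ℝ} {r : ℝ} (hy : y ∈ diamond x r) (i : ι) :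
    |x i - y i| < r :=
  (Finset.single_le_sum (f := fun i => |x i - y i|) (fun _ _ => abs_nonneg _)
    (Finset.mem_univ i)).trans_lt hy

theorem pos_of_mem_diamond {x y : ι → ℝ} {r : ℝ} (hx : ∀ i, r ≤ x i)
    (hy : y ∈ diamond x r) (i : ι) : 0 < y i := by
  linarith [(abs_lt.1 (abs_sub_lt_of_mem_diamond hy i)).2, hx i]

theorem mem_diamond_iff_of_le {x y : ι → ℝ} {r : ℝ} (hyx : y ≤ x) :
    y ∈ diamond x r ↔ ∑ i, x i - r < ∑ i, y i := by
  have : ∑ i, |x i - y i| = ∑ i, x i - ∑ i, y i := by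
    simp only [abs_of_nonneg (sub_nonneg.2 (hyx _)), Finset.sum_sub_distrib]
  rw [diamond, mem_ofPred_eq, this, sub_lt_comm]

variable {n : ℕ} (x : Fin (n + 1) → ℝ) {r δ h : ℝ}

theorem diamond_subset_tailSum_preimage (hr : 0 < r) :
    diamond x r ⊆ tailSum ⁻¹' (Metric.ball (Fin.tail x) r ×ˢ Ioi (∑ i, x i - r)) := by
  intro y hy
  refine ⟨?_, ?_⟩
  · rw [Metric.mem_ball', dist_pi_lt_iff hr]
    exact fun i => abs_sub_lt_of_mem_diamond hy i.succ
  · have : ∑ i, (x i - y i) < r := (Finset.sum_le_sum fun i _ => le_abs_self _).trans_lt hy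
    rw [Finset.sum_sub_distrib] at this
    exact sub_lt_comm.1 this

theorem tailSum_preimage_subset_diamond (hδh : n * δ + h ≤ r) :
    tailSum ⁻¹' (Icc (fun i => Fin.tail x i - δ) (Fin.tail x) ×ˢ
      Ioc (∑ i, x i - r) (∑ i, x i - r + h)) ⊆ diamond x r := by
  rintro y ⟨⟨hlower, hupper⟩, hsum_gt, hsum_le⟩
  have head_le : y 0 ≤ x 0 := by
    have : ∑ i, (Fin.tail x i - δ) ≤ ∑ i, Fin.tail y i := Finset.sum_le_sum fun i _ => hlower i
    simp only [tailSum, Fin.sum_univ_succ, Fin.tail, Finset.sum_sub_distrib, Finset.sum_const,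
      Finset.card_univ, Fintype.card_fin, nsmul_eq_mul] at this hsum_le
    linarith
  exact (mem_diamond_iff_of_le (Fin.cases head_le hupper)).2 hsum_gt

theorem expMeasure_diamond_le (hr : 0 < r) :
    expMeasure (n + 1) (diamond x r) ≤
      ENNReal.ofReal (2 ^ n * Real.exp (-(∑ i, x i - r)) * r ^ n) := by
  calc expMeasure (n + 1) (diamond x r)
      ≤ ∫⁻ y in diamond x r, ENNReal.ofReal (Real.exp (-∑ i, y i)) :=
        expMeasure_le_setLIntegral_exp_neg_sum _
    _ ≤ ∫⁻ y in tailSum ⁻¹' (Metric.ball (Fin.tail x) r ×ˢ Ioi (∑ i, x i - r)),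
          ENNReal.ofReal (Real.exp (-∑ i, y i)) :=
        lintegral_mono_set (diamond_subset_tailSum_preimage x hr)
    _ = ENNReal.ofReal (Real.exp (-(∑ i, x i - r))) * ENNReal.ofReal ((2 * r) ^ n) := by
        rw [setLIntegral_sum_tailSum_preimage measurableSet_ball measurableSet_Ioi
          (g := fun s => ENNReal.ofReal (Real.exp (-s))) (by fun_prop),
          setLIntegral_ofReal_exp_neg_Ioi, Real.volume_pi_ball _ hr, Fintype.card_fin]
    _ = ENNReal.ofReal (2 ^ n * Real.exp (-(∑ i, x i - r)) * r ^ n) := by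
        rw [← ENNReal.ofReal_mul (Real.exp_pos _).le]
        ring_nf

theorem le_expMeasure_diamond (hx : ∀ i, r ≤ x i) (hδ : 0 ≤ δ) (hh : 0 ≤ h)
    (hδh : n * δ + h ≤ r) :
    ENNReal.ofReal ((1 - Real.exp (-h)) * Real.exp (-(∑ i, x i - r)) * δ ^ n) ≤
      expMeasure (n + 1) (diamond x r) := by
  set A := ∑ i, x i - r
  have exp_sub : Real.exp (-A) - Real.exp (-(A + h)) = (1 - Real.exp (-h)) * Real.exp (-A) := by
    rw [neg_add, Real.exp_add]
    ring
  calc ENNReal.ofReal ((1 - Real.exp (-h)) * Real.exp (-A) * δ ^ n)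
      = (∫⁻ s in Ioc A (A + h), ENNReal.ofReal (Real.exp (-s))) *
          volume (Icc (fun i => Fin.tail x i - δ) (Fin.tail x)) := by
        rw [setLIntegral_ofReal_exp_neg_Ioc (le_add_of_nonneg_right hh), exp_sub,
          Real.volume_Icc_pi, ENNReal.ofReal_mul' (by positivity), ENNReal.ofReal_pow hδ]
        simp
    _ = ∫⁻ y in tailSum ⁻¹' (Icc (fun i => Fin.tail x i - δ) (Fin.tail x) ×ˢ Ioc A (A + h)),
          ENNReal.ofReal (Real.exp (-∑ i, y i)) :=
        (setLIntegral_sum_tailSum_preimage measurableSet_Icc measurableSet_Ioc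
          (g := fun s => ENNReal.ofReal (Real.exp (-s))) (by fun_prop)).symm
    _ ≤ ∫⁻ y in diamond x r, ENNReal.ofReal (Real.exp (-∑ i, y i)) :=
        lintegral_mono_set (tailSum_preimage_subset_diamond x hδh)
    _ ≤ expMeasure (n + 1) (diamond x r) :=
        setLIntegral_exp_neg_sum_le_expMeasure fun y hy i => (pos_of_mem_diamond hx hy i).le

end Diamond

/-- Sharp estimate for the measure of large diamonds away from the boundary of `ℝ^d_+`:
for `x ∈ ℝ^d_+` and `1 ≤ r ≤ min_i x_i`, the diamond `D(x,r)` lies in `ℝ^d_+` and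
`μ(D(x,r)) ≍ exp(-(|x|₁ - r)) r^(d-1)`, with constants depending only on `d`. -/
theorem expMeasure_diamond_estimate (d : ℕ) (hd : 1 ≤ d) :
    ∃ c C : ℝ, 0 < c ∧ 0 < C ∧
      ∀ x : Fin d → ℝ, (∀ i, 0 < x i) → ∀ r : ℝ, 1 ≤ r → (∀ i, r ≤ x i) →
        {y : Fin d → ℝ | ∑ i, |x i - y i| < r} ⊆ {y | ∀ i, 0 < y i} ∧
        ENNReal.ofReal (c * Real.exp (-((∑ i, x i) - r)) * r ^ ((d : ℝ) - 1))
          ≤ expMeasure d {y : Fin d → ℝ | ∑ i, |x i - y i| < r} ∧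
        expMeasure d {y : Fin d → ℝ | ∑ i, |x i - y i| < r}
          ≤ ENNReal.ofReal (C * Real.exp (-((∑ i, x i) - r)) * r ^ ((d : ℝ) - 1)) := by
  obtain ⟨n, rfl⟩ := Nat.exists_eq_add_of_le' hd
  have exp_lt_one : Real.exp (-(1 / 2)) < 1 := Real.exp_lt_one_iff.2 (by norm_num)
  refine ⟨(1 - Real.exp (-(1 / 2))) * (1 / (2 * (n + 1))) ^ n, 2 ^ n,
    mul_pos (sub_pos.2 exp_lt_one) (by positivity), by positivity, fun x _ r hr hx => ?_⟩
  have rpow_eq : r ^ (((n + 1 : ℕ) : ℝ) - 1) = r ^ n := by simp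
  have prism_fits : n * (r / (2 * (n + 1))) + 1 / 2 ≤ r := by
    have : (n + 1) * (r / (2 * (n + 1))) = r / 2 := by field_simp
    have : 0 ≤ r / (2 * (n + 1)) := by positivity
    linarith
  rw [rpow_eq]
  refine ⟨fun y => pos_of_mem_diamond hx, ?_, expMeasure_diamond_le x (by positivity)⟩
  refine Eq.trans_le ?_ (le_expMeasure_diamond x hx (by positivity) (by norm_num) prism_fits)
  ring_nf
end
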